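/- arXiv:2509.24454 — 2 statements merged into one kernel-verified Lean document; each statement's English description precedes it below -/
import Mathlib

section
/- Let s ∈ (0,1), n ≥ 2 an integer, and let Ω ⊂ ℝⁿ be an open set (possibly unbounded or disconnected) for which there is c₀ > 0 such that for every x ∈ ℝⁿ, liminf_{R → +∞} |B_R(x) ∩ Ω^c| / |B_R(x)| ≥ c₀, where |·| denotes Lebesgue measure. Let u : ℝⁿ → ℝ be locally C^{1,1} on Ω, belong to L_{2s}, be upper semicontinuous on the closure of Ω, and be bounded from above. Assume that (−Δ)^s u(x) ≤ 0 at every x ∈ Ω where u(x) > 0, and that u(x) ≤ 0 for all x ∈ Ω^c. Then u(x) ≤ 0 for all x ∈ Ω. -/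
/-!
The argument is by contradiction: suppose `A = sup u > 0`, and write `p = n + 2s`.

For small `ε` pick `x₀` with `u x₀ > A - ε`. The density of `Ωᶜ` at `x₀` gives a radius `r`, with no
uniform control in `x₀`, such that `Ωᶜ` fills a fixed fraction of `B_r(x₀)`
(`exists_radius_density`). Adding the paraboloid `2ε(1 - |y - x₀|²/r²)` to `u` produces a global
maximum at a point `x ∈ Ω` with `|x - x₀| ≤ r` and `u x > A - ε` (`exists_perturbed_max`), so that
the fractional Laplacian of `u` at `x` is nonpositive.

On the other hand, by maximality, `u x - u (x + z)` is at least `-2ε min(|z|²/r², 1)` plus a term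
which is odd in `z`, plus a gain `A/2` whenever `x + z ∈ B_r(x₀) ∖ Ω` (`increment_lower_bound`).
The odd term integrates to zero against the kernel (`setIntegral_linPart`). By scaling, the
paraboloid costs at most `2ε K r^n / r^p` with `K = ∫ min(|z|², 1) / |z|^p < ∞`, and the gain is at
least `D r^n / r^p` with `D > 0` depending only on `A, c₀, n, s`; see
`truncated_integral_lower_bound`. Both scale the same way in `r`, so `2εK < D` makes the truncated
integrals bounded below by a positive number independent of the truncation, a contradiction.
-/


open MeasureTheory Metric Set Filter

noncomputable section

/-- The weighted integrability condition defining the space `L_{2s}`. -/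
def MemL2s (n : ℕ) (s : ℝ) (u : EuclideanSpace ℝ (Fin n) → ℝ) : Prop :=
  MeasureTheory.Integrable fun y : EuclideanSpace ℝ (Fin n) =>
    |u y| / (1 + ‖y‖ ^ ((n : ℝ) + 2 * s))

/-- The fractional Laplacian `(-Δ)^s u (x)` exists (as a principal value with
normalization constant `Cns`) and equals `v`. -/
def HasFracLapAt (n : ℕ) (s Cns : ℝ) (u : EuclideanSpace ℝ (Fin n) → ℝ)
    (x : EuclideanSpace ℝ (Fin n)) (v : ℝ) : Prop :=
  Filter.Tendsto
    (fun ε : ℝ => Cns * ∫ y in {y : EuclideanSpace ℝ (Fin n) | ε < dist x y},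
        (u x - u y) / dist x y ^ ((n : ℝ) + 2 * s))
    (nhdsWithin 0 (Set.Ioi 0)) (nhds v)

/-- `u` is locally `C^{1,1}` on `Ω`. -/
def LocallyC11On {n : ℕ} (Ω : Set (EuclideanSpace ℝ (Fin n)))
    (u : EuclideanSpace ℝ (Fin n) → ℝ) : Prop :=
  ∀ x ∈ Ω, ∃ ε > 0, ∃ u' : EuclideanSpace ℝ (Fin n) → (EuclideanSpace ℝ (Fin n) →L[ℝ] ℝ),
    ∃ K : NNReal, (∀ y ∈ Metric.ball x ε, HasFDerivAt u (u' y) y) ∧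
      LipschitzOnWith K u' (Metric.ball x ε)


/-! ### The kernel -/

/-- Finiteness of the scale-invariant constant `K`: in polar coordinates the integrand behaves
like `t ^ (1 - 2s)` near `0` and like `t ^ (-1 - 2s)` at infinity. -/
lemma integrable_min_sq_kernel (n : ℕ) [NeZero n] {s : ℝ} (hs : s ∈ Set.Ioo (0 : ℝ) 1) :
    Integrable fun z : EuclideanSpace ℝ (Fin n) =>
      min (‖z‖ ^ 2) 1 / ‖z‖ ^ ((n : ℝ) + 2 * s) := by
  obtain ⟨hs0, hs1⟩ := hs
  have hn : 1 ≤ n := Nat.one_le_iff_ne_zero.mpr (NeZero.ne n)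
  refine (integrable_fun_norm_addHaar (volume : Measure (EuclideanSpace ℝ (Fin n)))
    (f := fun t : ℝ => min (t ^ 2) 1 / t ^ ((n : ℝ) + 2 * s))).2 ?_
  rw [finrank_euclideanSpace_fin, ← Ioc_union_Ioi_eq_Ioi (zero_le_one' ℝ)]
  have hpow : ∀ t : ℝ, 0 < t →
      t ^ (n - 1) / t ^ ((n : ℝ) + 2 * s) = t ^ (-1 - 2 * s) := by
    intro t ht
    rw [← Real.rpow_natCast, ← Real.rpow_sub ht, Nat.cast_sub hn]
    congr 1
    push_cast
    ring
  refine IntegrableOn.union ?_ ?_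
  · have h := (intervalIntegral.intervalIntegrable_rpow' (a := 0) (b := 1)
      (r := 1 - 2 * s) (by linarith)).1
    refine h.congr_fun (fun t ht => ?_) measurableSet_Ioc
    have hmin : min (t ^ 2) 1 = t ^ 2 := min_eq_left (pow_le_one₀ ht.1.le ht.2)
    simp only [smul_eq_mul]
    rw [hmin, mul_div_assoc', mul_div_right_comm, hpow t ht.1, ← Real.rpow_natCast,
      ← Real.rpow_add ht.1]
    congr 1
    push_cast
    ring
  · refine (integrableOn_Ioi_rpow_of_lt (a := -1 - 2 * s) (by linarith) one_pos).congr_fun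
      (fun t ht => ?_) measurableSet_Ioi
    have ht' : (1 : ℝ) < t := ht
    have hmin : min (t ^ 2) 1 = 1 := min_eq_right (one_le_pow₀ ht'.le)
    simp only [smul_eq_mul]
    rw [hmin, mul_one_div, hpow t (by linarith)]

lemma min_sq_kernel_scale {n : ℕ} (p : ℝ) {r : ℝ} (hr : 0 < r) (z : EuclideanSpace ℝ (Fin n)) :
    min ((‖z‖ / r) ^ 2) 1 / ‖z‖ ^ p
      = (r ^ p)⁻¹ * (min (‖r⁻¹ • z‖ ^ 2) 1 / ‖r⁻¹ • z‖ ^ p) := by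
  have h1 : ‖r⁻¹ • z‖ = ‖z‖ / r := by
    rw [norm_smul, norm_inv, Real.norm_of_nonneg hr.le, inv_mul_eq_div]
  have h2 : (r ^ p) ≠ 0 := (Real.rpow_pos_of_pos hr p).ne'
  rw [h1, Real.div_rpow (norm_nonneg _) hr.le]
  field_simp

lemma integrable_min_sq_kernel_scaled (n : ℕ) [NeZero n] {s : ℝ} (hs : s ∈ Set.Ioo (0 : ℝ) 1)
    {r : ℝ} (hr : 0 < r) :
    Integrable fun z : EuclideanSpace ℝ (Fin n) =>
      min ((‖z‖ / r) ^ 2) 1 / ‖z‖ ^ ((n : ℝ) + 2 * s) := by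
  simp_rw [min_sq_kernel_scale _ hr]
  exact ((integrable_min_sq_kernel n hs).comp_smul (inv_ne_zero hr.ne')).const_mul _

lemma integral_min_sq_kernel_scaled (n : ℕ) (p : ℝ) {r : ℝ} (hr : 0 < r) :
    ∫ z : EuclideanSpace ℝ (Fin n), min ((‖z‖ / r) ^ 2) 1 / ‖z‖ ^ p
      = r ^ n / r ^ p * ∫ z : EuclideanSpace ℝ (Fin n), min (‖z‖ ^ 2) 1 / ‖z‖ ^ p := by
  simp_rw [min_sq_kernel_scale _ hr]
  rw [integral_const_mul, Measure.integral_comp_inv_smul volume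
    (fun z : EuclideanSpace ℝ (Fin n) => min (‖z‖ ^ 2) 1 / ‖z‖ ^ p) r,
    finrank_euclideanSpace_fin, abs_of_pos (pow_pos hr n), smul_eq_mul]
  ring

lemma measurableSet_lt_norm {n : ℕ} (δ : ℝ) :
    MeasurableSet {z : EuclideanSpace ℝ (Fin n) | δ < ‖z‖} :=
  measurableSet_lt measurable_const measurable_norm

/-- The linear part of a competitor, truncated to a ball and multiplied by the kernel. -/
def linPart {n : ℕ} (p r : ℝ) (v z : EuclideanSpace ℝ (Fin n)) : ℝ :=
  (closedBall (0 : EuclideanSpace ℝ (Fin n)) r).indicator (fun z => inner ℝ z v / ‖z‖ ^ p) z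

lemma measurable_linPart {n : ℕ} (p r : ℝ) (v : EuclideanSpace ℝ (Fin n)) :
    Measurable (linPart p r v) := by
  unfold linPart
  refine Measurable.indicator ?_ measurableSet_closedBall
  fun_prop

lemma integrableOn_linPart {n : ℕ} {p r δ : ℝ} (hp : 0 ≤ p) (hδ : 0 < δ)
    (v : EuclideanSpace ℝ (Fin n)) :
    IntegrableOn (linPart p r v) {z | δ < ‖z‖} := by
  have hB : IntegrableOn (linPart p r v)
      ({z : EuclideanSpace ℝ (Fin n) | δ < ‖z‖} ∩ closedBall 0 r) := by
    refine Measure.integrableOn_of_bounded (M := |r| * ‖v‖ / δ ^ p)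
      ((measure_mono inter_subset_right).trans_lt measure_closedBall_lt_top).ne
      (measurable_linPart p r v).aestronglyMeasurable ?_
    refine ae_restrict_of_forall_mem
      ((measurableSet_lt_norm δ).inter measurableSet_closedBall) fun z hz => ?_
    have hz1 : δ < ‖z‖ := hz.1
    have hz2 : ‖z‖ ≤ r := by simpa using hz.2
    have h0 : 0 < δ ^ p := Real.rpow_pos_of_pos hδ p
    rw [linPart, indicator_of_mem hz.2, norm_div,
      Real.norm_of_nonneg (Real.rpow_nonneg (norm_nonneg z) p)]
    have h1 : ‖(inner ℝ z v : ℝ)‖ ≤ |r| * ‖v‖ :=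
      (norm_inner_le_norm z v).trans
        (mul_le_mul_of_nonneg_right (hz2.trans (le_abs_self r)) (norm_nonneg v))
    have h2 : δ ^ p ≤ ‖z‖ ^ p := Real.rpow_le_rpow hδ.le hz1.le hp
    gcongr
  rw [IntegrableOn, inter_comm, ← Measure.restrict_restrict measurableSet_closedBall] at hB
  have h3 := (integrable_indicator_iff
    (measurableSet_closedBall (x := (0 : EuclideanSpace ℝ (Fin n))) (ε := r))).2 hB
  refine h3.congr (Eventually.of_forall fun z => ?_)
  by_cases hz : z ∈ closedBall (0 : EuclideanSpace ℝ (Fin n)) r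
  · rw [indicator_of_mem hz]
  · rw [indicator_of_notMem hz, linPart, indicator_of_notMem hz]

/-- The linear part is odd, so it does not contribute to truncated integrals. -/
lemma setIntegral_linPart {n : ℕ} (p r δ : ℝ) (v : EuclideanSpace ℝ (Fin n)) :
    ∫ z in {z | δ < ‖z‖}, linPart p r v z = 0 := by
  rw [← integral_indicator (measurableSet_lt_norm δ)]
  set F : EuclideanSpace ℝ (Fin n) → ℝ := indicator {z | δ < ‖z‖} (linPart p r v) with hF
  have hodd : ∀ z, F (-z) = -F z := by
    intro z
    classical
    simp only [hF, linPart, indicator_apply, mem_ofPred_eq, norm_neg, mem_closedBall_zero_iff,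
      inner_neg_left]
    split_ifs <;> ring
  have h := integral_neg_eq_self F volume
  simp_rw [hodd, integral_neg] at h
  linarith

/-! ### Integrability away from the centre -/

/-- Membership in `L_{2s}` as encoded by `MemL2s` only makes `|u|` measurable. The function `u`
itself is measurable because it is continuous on `Ω` and equals `-|u|` off `Ω`. -/
lemma aestronglyMeasurable_of_memL2s {n : ℕ} {s : ℝ} {Ω : Set (EuclideanSpace ℝ (Fin n))}
    (hΩ : IsOpen Ω) {u : EuclideanSpace ℝ (Fin n) → ℝ} (hreg : LocallyC11On Ω u)
    (hL2s : MemL2s n s u) (hext : ∀ x ∉ Ω, u x ≤ 0) : AEStronglyMeasurable u volume := by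
  have hcont : ContinuousOn u Ω := by
    intro x hx
    obtain ⟨ε, hε, u', K, hu', -⟩ := hreg x hx
    exact (hu' x (mem_ball_self hε)).continuousAt.continuousWithinAt
  have habs : AEStronglyMeasurable (fun y => |u y|) volume := by
    have hw : Measurable fun y : EuclideanSpace ℝ (Fin n) => 1 + ‖y‖ ^ ((n : ℝ) + 2 * s) := by
      fun_prop
    refine (hL2s.aestronglyMeasurable.mul hw.aestronglyMeasurable).congr
      (Eventually.of_forall fun y => ?_)
    have : 0 ≤ ‖y‖ ^ ((n : ℝ) + 2 * s) := Real.rpow_nonneg (norm_nonneg y) _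
    simp only [Pi.mul_apply]
    field_simp
  rw [← Measure.restrict_univ (μ := volume), ← union_compl_self Ω,
    aestronglyMeasurable_union_iff]
  refine ⟨hcont.aestronglyMeasurable hΩ.measurableSet, ?_⟩
  refine (habs.neg.mono_measure Measure.restrict_le_self).congr ?_
  refine ae_restrict_of_forall_mem hΩ.measurableSet.compl fun y hy => ?_
  simp [abs_of_nonpos (hext y hy)]

/-- Comparison of the weight defining `L_{2s}` with the kernel centred at `x`, away from `x`. -/
lemma one_add_norm_rpow_le {n : ℕ} {p δ : ℝ} (hp : 0 ≤ p) (hδ : 0 < δ)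
    (x z : EuclideanSpace ℝ (Fin n)) (hz : δ < ‖z‖) :
    1 + ‖x + z‖ ^ p ≤ ((δ ^ p)⁻¹ + (‖x‖ / δ + 1) ^ p) * ‖z‖ ^ p := by
  have h0 : 0 < δ ^ p := Real.rpow_pos_of_pos hδ p
  have h1 : 1 ≤ (δ ^ p)⁻¹ * ‖z‖ ^ p := by
    rw [inv_mul_eq_div, one_le_div h0]
    exact Real.rpow_le_rpow hδ.le hz.le hp
  have h2 : ‖x + z‖ ^ p ≤ (‖x‖ / δ + 1) ^ p * ‖z‖ ^ p := by
    rw [← Real.mul_rpow (by positivity) (norm_nonneg z)]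
    refine Real.rpow_le_rpow (norm_nonneg _) ?_ hp
    have h3 : ‖x‖ ≤ ‖x‖ / δ * ‖z‖ := by
      rw [div_mul_eq_mul_div, le_div_iff₀ hδ]
      exact mul_le_mul_of_nonneg_left hz.le (norm_nonneg x)
    linarith [norm_add_le x z]
  linarith

lemma integrableOn_inv_norm_rpow (n : ℕ) [NeZero n] {s : ℝ} (hs : s ∈ Set.Ioo (0 : ℝ) 1)
    {δ : ℝ} (hδ : 0 < δ) :
    IntegrableOn (fun z : EuclideanSpace ℝ (Fin n) => 1 / ‖z‖ ^ ((n : ℝ) + 2 * s))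
      {z | δ < ‖z‖} := by
  refine (integrable_min_sq_kernel_scaled n hs hδ).integrableOn.congr_fun (fun z hz => ?_)
    (measurableSet_lt_norm δ)
  have hz' : δ < ‖z‖ := hz
  have : min ((‖z‖ / δ) ^ 2) 1 = 1 :=
    min_eq_right (one_le_pow₀ ((one_le_div hδ).2 hz'.le))
  simp only [this]

/-- The truncated integrals defining the fractional Laplacian converge absolutely, so they never
take the default value `0` of a divergent Bochner integral. -/
lemma integrableOn_diff_quotient (n : ℕ) [NeZero n] {s : ℝ} (hs : s ∈ Set.Ioo (0 : ℝ) 1)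
    {u : EuclideanSpace ℝ (Fin n) → ℝ} (hu : AEStronglyMeasurable u volume)
    (hL2s : MemL2s n s u) (x : EuclideanSpace ℝ (Fin n)) {δ : ℝ} (hδ : 0 < δ) :
    IntegrableOn (fun z => (u x - u (x + z)) / ‖z‖ ^ ((n : ℝ) + 2 * s)) {z | δ < ‖z‖} := by
  have hp : 0 ≤ (n : ℝ) + 2 * s := by have := hs.1; positivity
  set p := (n : ℝ) + 2 * s with hpdef
  have h1 : IntegrableOn (fun z : EuclideanSpace ℝ (Fin n) => u x * (1 / ‖z‖ ^ p))
      {z | δ < ‖z‖} := (integrableOn_inv_norm_rpow n hs hδ).const_mul (u x)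
  have hshift : AEStronglyMeasurable (fun z => u (x + z)) volume :=
    hu.comp_measurePreserving (measurePreserving_add_left volume x)
  have h2 : IntegrableOn (fun z => u (x + z) / ‖z‖ ^ p) {z | δ < ‖z‖} := by
    have hw : Measurable fun z : EuclideanSpace ℝ (Fin n) => (‖z‖ ^ p)⁻¹ := by fun_prop
    have hmeas : AEStronglyMeasurable (fun z => u (x + z) / ‖z‖ ^ p) volume := by
      simp_rw [div_eq_mul_inv]
      exact hshift.mul hw.aestronglyMeasurable
    have hdom := (Integrable.comp_add_left hL2s x).const_mul ((δ ^ p)⁻¹ + (‖x‖ / δ + 1) ^ p)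
    refine Integrable.mono' hdom.integrableOn hmeas.restrict
      (ae_restrict_of_forall_mem (measurableSet_lt_norm δ) fun z hz => ?_)
    have hz' : δ < ‖z‖ := hz
    have hzp : 0 < ‖z‖ ^ p := Real.rpow_pos_of_pos (hδ.trans hz') p
    have hxz : 0 ≤ ‖x + z‖ ^ p := Real.rpow_nonneg (norm_nonneg _) p
    rw [norm_div, Real.norm_eq_abs, Real.norm_of_nonneg hzp.le, ← hpdef, mul_div_assoc',
      div_le_div_iff₀ hzp (by linarith)]
    have := mul_le_mul_of_nonneg_left (one_add_norm_rpow_le hp hδ x z hz') (abs_nonneg (u (x + z)))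
    linarith
  refine (h1.sub h2).congr_fun (fun z _ => ?_) (measurableSet_lt_norm δ)
  simp only [Pi.sub_apply]
  ring

/-! ### The lower bound at an almost-maximum point -/

/-- If the increments `u x - u (x + z)` dominate a small paraboloid, an odd term and a definite
gain `B` on the set `E` at distance at most `2r`, then the truncated integrals are bounded
below, uniformly in the truncation `δ`, by a quantity which scales in `r` like the kernel. -/
lemma truncated_integral_lower_bound (n : ℕ) [NeZero n] {s : ℝ} (hs : s ∈ Set.Ioo (0 : ℝ) 1)
    {f : EuclideanSpace ℝ (Fin n) → ℝ} {r δ a b B : ℝ} (hr : 0 < r) (hδ : 0 < δ)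
    (ha : 0 ≤ a) (hB : 0 ≤ B) {v : EuclideanSpace ℝ (Fin n)}
    {E : Set (EuclideanSpace ℝ (Fin n))} (hE : MeasurableSet E) (hEδ : E ⊆ {z | δ < ‖z‖})
    (hEr : ∀ z ∈ E, ‖z‖ ≤ 2 * r)
    (hf : IntegrableOn (fun z => f z / ‖z‖ ^ ((n : ℝ) + 2 * s)) {z | δ < ‖z‖})
    (hle : ∀ z, -a * min ((‖z‖ / r) ^ 2) 1
        - b * (closedBall (0 : EuclideanSpace ℝ (Fin n)) r).indicator (fun z => inner ℝ z v) z
        + B * E.indicator 1 z ≤ f z) :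
    B / (2 * r) ^ ((n : ℝ) + 2 * s) * (volume E).toReal
      - a * (r ^ n / r ^ ((n : ℝ) + 2 * s) * ∫ z : EuclideanSpace ℝ (Fin n),
          min (‖z‖ ^ 2) 1 / ‖z‖ ^ ((n : ℝ) + 2 * s))
      ≤ ∫ z in {z | δ < ‖z‖}, f z / ‖z‖ ^ ((n : ℝ) + 2 * s) := by
  have hp : 0 ≤ (n : ℝ) + 2 * s := by have := hs.1; positivity
  rw [← integral_min_sq_kernel_scaled n _ hr]
  have hK := integrable_min_sq_kernel_scaled n hs hr
  set p := (n : ℝ) + 2 * s with hpdef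
  set S : Set (EuclideanSpace ℝ (Fin n)) := {z | δ < ‖z‖} with hS
  have hEfin : volume E ≠ ⊤ := by
    refine ((measure_mono (t := closedBall 0 (2 * r)) fun z hz => ?_).trans_lt
      measure_closedBall_lt_top).ne
    simpa using hEr z hz
  have hi1 : IntegrableOn (fun z : EuclideanSpace ℝ (Fin n) =>
      a * (min ((‖z‖ / r) ^ 2) 1 / ‖z‖ ^ p)) S := hK.integrableOn.const_mul a
  have hi2 : IntegrableOn (fun z => b * linPart p r v z) S :=
    (integrableOn_linPart hp hδ v).const_mul b
  have hi3 : IntegrableOn (E.indicator fun _ => B / (2 * r) ^ p) S :=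
    ((integrable_indicator_iff hE).2 (integrableOn_const hEfin)).integrableOn
  have hcomp : ∫ z in S, (E.indicator (fun _ => B / (2 * r) ^ p) z
      - a * (min ((‖z‖ / r) ^ 2) 1 / ‖z‖ ^ p) - b * linPart p r v z)
      ≤ ∫ z in S, f z / ‖z‖ ^ p := by
    refine setIntegral_mono_on ((hi3.sub hi1).sub hi2) hf (measurableSet_lt_norm δ)
      fun z hz => ?_
    have hz' : δ < ‖z‖ := hz
    have hzp : 0 < ‖z‖ ^ p := Real.rpow_pos_of_pos (hδ.trans hz') p
    refine le_trans ?_ (div_le_div_of_nonneg_right (hle z) hzp.le)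
    have h1 : E.indicator (fun _ => B / (2 * r) ^ p) z ≤ B * E.indicator 1 z / ‖z‖ ^ p := by
      by_cases hzE : z ∈ E
      · rw [indicator_of_mem hzE, indicator_of_mem hzE, Pi.one_apply, mul_one]
        exact div_le_div_of_nonneg_left hB hzp
          (Real.rpow_le_rpow (norm_nonneg z) (hEr z hzE) hp)
      · simp [indicator_of_notMem hzE]
    have h2 : linPart p r v z
        = (closedBall (0 : EuclideanSpace ℝ (Fin n)) r).indicator (fun z => inner ℝ z v) z
          / ‖z‖ ^ p := by
      classical
      simp only [linPart, indicator_apply]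
      split_ifs <;> simp
    rw [h2]
    refine (sub_le_sub_right (sub_le_sub_right h1 _) _).trans (le_of_eq ?_)
    ring
  have heq : ∫ z in S, (E.indicator (fun _ => B / (2 * r) ^ p) z
      - a * (min ((‖z‖ / r) ^ 2) 1 / ‖z‖ ^ p) - b * linPart p r v z)
      = B / (2 * r) ^ p * (volume E).toReal
        - a * ∫ z in S, min ((‖z‖ / r) ^ 2) 1 / ‖z‖ ^ p := by
    rw [integral_sub (f := fun z => E.indicator (fun _ => B / (2 * r) ^ p) z
        - a * (min ((‖z‖ / r) ^ 2) 1 / ‖z‖ ^ p)) (hi3.sub hi1) hi2,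
      integral_sub hi3 hi1, integral_const_mul,
      integral_const_mul, setIntegral_linPart, setIntegral_indicator hE,
      inter_eq_right.2 hEδ, setIntegral_const, smul_eq_mul, Measure.real]
    ring
  have hmono : ∫ z in S, min ((‖z‖ / r) ^ 2) 1 / ‖z‖ ^ p
      ≤ ∫ z : EuclideanSpace ℝ (Fin n), min ((‖z‖ / r) ^ 2) 1 / ‖z‖ ^ p :=
    setIntegral_le_integral hK (Eventually.of_forall fun z => by
      simp only [Pi.zero_apply]; positivity)
  rw [heq] at hcomp
  have := mul_le_mul_of_nonneg_left hmono ha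
  linarith

/-- The truncated integral defining the fractional Laplacian, centred at the origin. -/
lemma truncated_integral_shift {n : ℕ} (p δ : ℝ) (u : EuclideanSpace ℝ (Fin n) → ℝ)
    (x : EuclideanSpace ℝ (Fin n)) :
    ∫ y in {y | δ < dist x y}, (u x - u y) / dist x y ^ p
      = ∫ z in {z | δ < ‖z‖}, (u x - u (x + z)) / ‖z‖ ^ p := by
  have hm : MeasurableSet {y : EuclideanSpace ℝ (Fin n) | δ < dist x y} :=
    measurableSet_lt measurable_const (by fun_prop)
  rw [← integral_indicator hm, ← integral_indicator (measurableSet_lt_norm δ),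
    ← integral_add_left_eq_self _ x]
  congr 1
  ext z
  simp [indicator_apply]

/-! ### The contradiction argument -/

lemma exists_radius_density {n : ℕ} [NeZero n] {Ω : Set (EuclideanSpace ℝ (Fin n))} {c₀ : ℝ}
    (hc₀ : 0 < c₀) (x : EuclideanSpace ℝ (Fin n))
    (hdensity : c₀ ≤ Filter.liminf
        (fun R : ℝ => (volume (Metric.ball x R ∩ Ωᶜ)).toReal / (volume (Metric.ball x R)).toReal)
        Filter.atTop) :
    ∃ r : ℝ, 0 < r ∧ c₀ / 2 * (r ^ n * (volume (ball (0 : EuclideanSpace ℝ (Fin n)) 1)).toReal)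
      ≤ (volume (ball x r ∩ Ωᶜ)).toReal := by
  have hev := eventually_lt_of_lt_liminf (lt_of_lt_of_le (half_lt_self hc₀) hdensity)
    (isBoundedUnder_of ⟨0, fun R => by simp only [ge_iff_le]; positivity⟩)
  obtain ⟨r, hr, hr0⟩ := (hev.and (eventually_gt_atTop 0)).exists
  refine ⟨r, hr0, ?_⟩
  have hball : (volume (ball x r)).toReal
      = r ^ n * (volume (ball (0 : EuclideanSpace ℝ (Fin n)) 1)).toReal := by
    rw [Measure.addHaar_ball volume x hr0.le, finrank_euclideanSpace_fin, ENNReal.toReal_mul,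
      ENNReal.toReal_ofReal (by positivity)]
  have hpos : 0 < (volume (ball x r)).toReal :=
    ENNReal.toReal_pos (measure_ball_pos volume x hr0).ne' measure_ball_lt_top.ne
  rw [← hball]
  exact ((lt_div_iff₀ hpos).1 hr).le

/-- Adding a small paraboloid centred at an almost-maximum point `x₀` produces a point of `Ω`
within distance `r` of `x₀` where the perturbed function attains a global maximum. -/
lemma exists_perturbed_max {n : ℕ} {Ω : Set (EuclideanSpace ℝ (Fin n))}
    {u : EuclideanSpace ℝ (Fin n) → ℝ} (husc : UpperSemicontinuousOn u (closure Ω))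
    (hext : ∀ x ∉ Ω, u x ≤ 0) {A ε r : ℝ} (hε : 0 < ε) (hεA : 2 * ε ≤ A) (hr : 0 < r)
    (hA : ∀ x, u x ≤ A) {x₀ : EuclideanSpace ℝ (Fin n)} (hx₀ : A - ε < u x₀) :
    ∃ x ∈ Ω, ‖x - x₀‖ ≤ r ∧ A - ε < u x ∧
      ∀ y, u y - 2 * ε / r ^ 2 * ‖y - x₀‖ ^ 2 ≤ u x - 2 * ε / r ^ 2 * ‖x - x₀‖ ^ 2 := by
  have hx₀Ω : x₀ ∈ Ω := by
    by_contra h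
    linarith [hext x₀ h]
  have hr2 : 0 < r ^ 2 := by positivity
  have hcε : 0 < 2 * ε / r ^ 2 := by positivity
  have hcr : 2 * ε / r ^ 2 * r ^ 2 = 2 * ε := by field_simp
  set c := 2 * ε / r ^ 2
  have hmem₀ : x₀ ∈ closedBall x₀ r ∩ closure Ω :=
    ⟨mem_closedBall_self hr.le, subset_closure hx₀Ω⟩
  have hq : Continuous fun y : EuclideanSpace ℝ (Fin n) => -(c * ‖y - x₀‖ ^ 2) := by fun_prop
  obtain ⟨x, hx, hmax⟩ := UpperSemicontinuousOn.exists_isMaxOn ⟨x₀, hmem₀⟩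
    ((isCompact_closedBall x₀ r).inter_right isClosed_closure)
    ((husc.mono inter_subset_right).add
      (hq.upperSemicontinuous.upperSemicontinuousOn _))
  rw [isMaxOn_iff] at hmax
  have h0 := hmax x₀ hmem₀
  simp only [sub_self, norm_zero] at h0
  have hpos : 0 ≤ c * ‖x - x₀‖ ^ 2 := by positivity
  have hux : A - ε < u x := by nlinarith
  refine ⟨x, ?_, by simpa [dist_eq_norm] using hx.1, hux, fun y => ?_⟩
  · by_contra h
    linarith [hext x h]
  · by_cases hy : y ∈ closedBall x₀ r ∩ closure Ω
    · linarith [hmax y hy]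
    have hposy : 0 ≤ c * ‖y - x₀‖ ^ 2 := by positivity
    by_cases hyΩ : y ∈ closure Ω
    · have hyr : r < ‖y - x₀‖ := by
        by_contra! h
        exact hy ⟨by simpa [dist_eq_norm] using h, hyΩ⟩
      have : c * r ^ 2 ≤ c * ‖y - x₀‖ ^ 2 := by gcongr
      linarith [hA y]
    · linarith [hext y fun h => hyΩ (subset_closure h)]

/-- At the perturbed maximum point, the increments of `u` dominate a paraboloid of size `ε`
(capped at distance `r`) plus an odd term, with an extra gain of `A / 2` where `u ≤ 0`. -/
lemma increment_lower_bound {n : ℕ} {u : EuclideanSpace ℝ (Fin n) → ℝ} {A ε r : ℝ}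
    (hε : 0 < ε) (hεA : 14 * ε ≤ A) (hr : 0 < r) (hA : ∀ x, u x ≤ A)
    {x₀ x : EuclideanSpace ℝ (Fin n)} (hxr : ‖x - x₀‖ ≤ r) (hux : A - ε < u x)
    (hmax : ∀ y, u y - 2 * ε / r ^ 2 * ‖y - x₀‖ ^ 2 ≤ u x - 2 * ε / r ^ 2 * ‖x - x₀‖ ^ 2)
    {E : Set (EuclideanSpace ℝ (Fin n))} (hE : ∀ z ∈ E, u (x + z) ≤ 0)
    (z : EuclideanSpace ℝ (Fin n)) :
    -(2 * ε) * min ((‖z‖ / r) ^ 2) 1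
        - 4 * ε / r ^ 2 * (closedBall (0 : EuclideanSpace ℝ (Fin n)) r).indicator
            (fun z => inner ℝ z (x - x₀)) z
        + A / 2 * E.indicator 1 z ≤ u x - u (x + z) := by
  classical
  have hgain : E.indicator (1 : EuclideanSpace ℝ (Fin n) → ℝ) z = 0 ∨
      (E.indicator (1 : EuclideanSpace ℝ (Fin n) → ℝ) z = 1 ∧ u (x + z) ≤ 0) := by
    by_cases hz : z ∈ E
    · exact Or.inr ⟨by rw [indicator_of_mem hz, Pi.one_apply], hE z hz⟩
    · exact Or.inl (indicator_of_notMem hz _)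
  by_cases hzr : ‖z‖ ≤ r
  · have hzB : z ∈ closedBall (0 : EuclideanSpace ℝ (Fin n)) r := by simpa using hzr
    have hdiv : ‖z‖ / r ≤ 1 := (div_le_one hr).2 hzr
    have hmin : min ((‖z‖ / r) ^ 2) 1 = (‖z‖ / r) ^ 2 :=
      min_eq_left (pow_le_one₀ (by positivity) hdiv)
    rw [indicator_of_mem hzB, hmin]
    rcases hgain with h | ⟨h, hu⟩
    · have hy := hmax (x + z)
      have hexp : ‖x + z - x₀‖ ^ 2
          = ‖z‖ ^ 2 + 2 * inner ℝ z (x - x₀) + ‖x - x₀‖ ^ 2 := by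
        rw [← norm_add_sq_real]
        congr 2
        abel
      rw [hexp] at hy
      rw [h]
      have e1 : -(2 * ε) * (‖z‖ / r) ^ 2 - 4 * ε / r ^ 2 * inner ℝ z (x - x₀) + A / 2 * 0
          = -(2 * ε / r ^ 2 * (‖z‖ ^ 2 + 2 * inner ℝ z (x - x₀) + ‖x - x₀‖ ^ 2))
            + 2 * ε / r ^ 2 * ‖x - x₀‖ ^ 2 := by
        field_simp
        ring
      linarith
    · have hin : -(r * r) ≤ inner ℝ z (x - x₀) := by
        have h1 := abs_real_inner_le_norm z (x - x₀)
        have h2 : ‖z‖ * ‖x - x₀‖ ≤ r * r := by gcongr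
        linarith [neg_abs_le (inner ℝ z (x - x₀) : ℝ)]
      have h3 : -(4 * ε) ≤ 4 * ε / r ^ 2 * inner ℝ z (x - x₀) := by
        have := mul_le_mul_of_nonneg_left hin (show 0 ≤ 4 * ε / r ^ 2 by positivity)
        have e : 4 * ε / r ^ 2 * -(r * r) = -(4 * ε) := by field_simp
        linarith
      have h4 : 0 ≤ 2 * ε * (‖z‖ / r) ^ 2 := by positivity
      rw [h]
      linarith
  · have hzB : z ∉ closedBall (0 : EuclideanSpace ℝ (Fin n)) r := by simpa using hzr
    have hmin : min ((‖z‖ / r) ^ 2) 1 = 1 :=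
      min_eq_right (one_le_pow₀ ((one_le_div hr).2 (le_of_not_ge hzr)))
    rw [indicator_of_notMem hzB, hmin]
    rcases hgain with h | ⟨h, hu⟩
    · rw [h]
      linarith [hA (x + z)]
    · rw [h]
      linarith

/-- Maximum principle for unbounded domains, Lemma 2.1.2. -/
theorem maximum_principle_unbounded_domains
    (n : ℕ) [NeZero n] (hn : 2 ≤ n) (s : ℝ) (hs : s ∈ Set.Ioo (0 : ℝ) 1)
    (Cns : ℝ) (hCns : 0 < Cns)
    (Ω : Set (EuclideanSpace ℝ (Fin n))) (hΩ : IsOpen Ω)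
    (c₀ : ℝ) (hc₀ : 0 < c₀)
    (hdensity : ∀ x : EuclideanSpace ℝ (Fin n),
      c₀ ≤ Filter.liminf
        (fun R : ℝ => (volume (Metric.ball x R ∩ Ωᶜ)).toReal / (volume (Metric.ball x R)).toReal)
        Filter.atTop)
    (u : EuclideanSpace ℝ (Fin n) → ℝ)
    (hreg : LocallyC11On Ω u)
    (hL2s : MemL2s n s u)
    (husc : UpperSemicontinuousOn u (closure Ω))
    (hbdd : ∃ M : ℝ, ∀ x, u x ≤ M)
    (hineq : ∀ x ∈ Ω, 0 < u x → ∃ L : ℝ, HasFracLapAt n s Cns u x L ∧ L ≤ 0)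
    (hext : ∀ x ∉ Ω, u x ≤ 0) :
    ∀ x ∈ Ω, u x ≤ 0 := by
  by_contra! hcon
  obtain ⟨x₁, -, hx₁⟩ := hcon
  obtain ⟨M, hM⟩ := hbdd
  have hu := aestronglyMeasurable_of_memL2s hΩ hreg hL2s hext
  have hbd : BddAbove (range u) := ⟨M, by rintro _ ⟨y, rfl⟩; exact hM y⟩
  set A := ⨆ y, u y with hAdef
  have hA : ∀ y, u y ≤ A := fun y => le_ciSup hbd y
  have hApos : 0 < A := hx₁.trans_le (hA x₁)
  set p := (n : ℝ) + 2 * s with hp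
  set ω := (volume (ball (0 : EuclideanSpace ℝ (Fin n)) 1)).toReal with hω
  have hωpos : 0 < ω :=
    ENNReal.toReal_pos (measure_ball_pos volume _ one_pos).ne' measure_ball_lt_top.ne
  set K := ∫ z : EuclideanSpace ℝ (Fin n), min (‖z‖ ^ 2) 1 / ‖z‖ ^ p with hK
  have hK0 : 0 ≤ K := integral_nonneg fun z => by simp only [Pi.zero_apply]; positivity
  -- `D` is the gain at unit scale coming from the density of the complement of `Ω`;
  -- `ε` is chosen so that the loss `2 ε K` caused by the paraboloid is smaller.
  set D := A / 2 / 2 ^ p * (c₀ / 2 * ω) with hD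
  have hDpos : 0 < D := by positivity
  obtain ⟨ε, hε, hεA, hεD⟩ : ∃ ε > 0, 14 * ε ≤ A ∧ 2 * ε * K < D := by
    refine ⟨min (A / 14) (D / (2 * K + 1)), by positivity, ?_, ?_⟩
    · linarith [min_le_left (A / 14) (D / (2 * K + 1))]
    · have h1 := min_le_right (A / 14) (D / (2 * K + 1))
      rw [le_div_iff₀ (by positivity)] at h1
      have : 0 < min (A / 14) (D / (2 * K + 1)) := by positivity
      linarith
  obtain ⟨x₀, hx₀⟩ := exists_lt_of_lt_ciSup (show A - ε < ⨆ y, u y by linarith)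
  obtain ⟨r, hr, hdens⟩ := exists_radius_density hc₀ x₀ (hdensity x₀)
  obtain ⟨x, hxΩ, hxr, hux, hmax⟩ :=
    exists_perturbed_max husc hext hε (by linarith) hr hA hx₀
  obtain ⟨L, hL, hL0⟩ := hineq x hxΩ (by linarith)
  set E : Set (EuclideanSpace ℝ (Fin n)) := (fun z => x + z) ⁻¹' (ball x₀ r ∩ Ωᶜ) with hEdef
  have hEm : MeasurableSet E :=
    (measurable_const_add x) (measurableSet_ball.inter hΩ.measurableSet.compl)
  have hEvol : volume E = volume (ball x₀ r ∩ Ωᶜ) := measure_preimage_add volume x _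
  have hEu : ∀ z ∈ E, u (x + z) ≤ 0 := fun z hz => hext _ hz.2
  have hEr : ∀ z ∈ E, ‖z‖ ≤ 2 * r := by
    intro z hz
    have h1 : ‖x + z - x₀‖ < r := by simpa [dist_eq_norm] using hz.1
    have h2 : z = (x + z - x₀) - (x - x₀) := by abel
    rw [h2]
    linarith [norm_sub_le (x + z - x₀) (x - x₀)]
  obtain ⟨η, hη, hηΩ⟩ := Metric.isOpen_iff.1 hΩ x hxΩ
  set G := r ^ n / r ^ p * (D - 2 * ε * K) with hG
  have hGpos : 0 < G := by
    have : 0 < D - 2 * ε * K := by linarith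
    positivity
  -- For `δ < η` the truncation removes only points of `Ω`, so it does not affect the gain on `E`.
  have hlow : ∀ δ ∈ Ioo 0 η, Cns * G ≤ Cns * ∫ y in {y | δ < dist x y},
      (u x - u y) / dist x y ^ p := by
    intro δ hδ
    rw [truncated_integral_shift]
    refine mul_le_mul_of_nonneg_left ?_ hCns.le
    have hEδ : E ⊆ {z | δ < ‖z‖} := by
      intro z hz
      by_contra h
      have hzδ : ‖z‖ ≤ δ := not_lt.1 h
      exact hz.2 (hηΩ (by simpa [dist_eq_norm] using hzδ.trans_lt hδ.2))
    refine le_trans ?_ (truncated_integral_lower_bound n hs hr hδ.1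
      (by positivity : 0 ≤ 2 * ε) (by positivity : 0 ≤ A / 2) hEm hEδ hEr
      (integrableOn_diff_quotient n hs hu hL2s x hδ.1)
      (increment_lower_bound hε hεA hr hA hxr hux hmax hEu))
    rw [← hp, ← hK, hEvol]
    have h1 := mul_le_mul_of_nonneg_left hdens
      (show 0 ≤ A / 2 / (2 * r) ^ p by positivity)
    have h2 : A / 2 / (2 * r) ^ p * (c₀ / 2 * (r ^ n * ω)) = r ^ n / r ^ p * D := by
      rw [hD, Real.mul_rpow zero_le_two hr.le]
      field_simp
    rw [h2] at h1
    rw [hG]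
    linarith
  have hLG : Cns * G ≤ L :=
    ge_of_tendsto hL (mem_of_superset (Ioo_mem_nhdsGT hη) hlow)
  have : 0 < Cns * G := by positivity
  linarith
end
end

section
/- Let s ∈ (0,1), n ≥ 2 an integer, and β ∈ (0, 2s). For λ > 0 define h : ℝⁿ → ℝ by h(x) = (max(1 − x₁²/λ², 0))^s · (1 + |x′|²)^{β/2}, where x = (x₁, x′) with x′ = (x₂, …, x_n). Then there exist constants C > 0 and λ₀ > 0, depending only on n, s, β, such that for every λ ∈ (0, λ₀] and every x ∈ ℝⁿ with 0 < x₁ < λ, the fractional Laplacian (−Δ)^s h(x) exists and satisfies (−Δ)^s h(x) ≥ (C / λ^{2s}) · h(x). -/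
/-!
Write `p = n + 2 s`, `a = x₁` and let `w = (1 + |x'|²) ^ (β / 2)` be the tangential weight at `x`.
Since `h` is smooth near `x` and grows at most like `|y| ^ β` with `β < 2 s`, the principal value
exists and equals half the absolutely convergent integral of the second difference
`D z = 2 h x - h (x + z) - h (x - z)` against `‖z‖ ^ (-p)` (`hasFracLapAt_secondDiff`).

The lower bound rests on one elementary observation. In the first variable, `1 - t² / λ²` lies below
its tangent line at `a`, so the profile `(1 - t² / λ²)₊ ^ s` lies below a multiple of
`(1 - θ (t - a))₊ ^ s`, with `θ = 2 a / (λ² - a²)`, and the two agree at `t = a`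
(`profile_le_halfLine`). The function `(1 + τ)₊ ^ s` is `s`-harmonic on its half-line; here only
superharmonicity is needed. It says that the second differences of this comparison function have a
nonnegative integral against `‖z‖ ^ (-p)`, which is proved by slicing `ℝⁿ` along the first axis,
so that the kernel becomes a multiple of `|τ| ^ (-(1 + 2 s))` (`integral_slice`), and by a
computation on the line (`line_integral_nonneg`): the substitution `σ = t / (1 + t)` turns the
integral over `(0, ∞)` into one over `(0, 1)` with an explicit primitive.

For `z₁ > 2 λ` the point `x - z` is outside the slab, where the profile vanishes, while the
comparison function is at least `1`. This improves the second difference by at least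
`1_{z₁ > 2 λ}`, whose integral against `‖z‖ ^ (-p)` is a positive multiple of `λ ^ (-2 s)`
(`integral_gain_ge`).
The dependence of the weight on `x'` costs, after averaging over the reflection of `z` in
`z₁ = 0`, at most `2 w ((1 + |z'|²) ^ (β / 2) - 1)`, by the concavity of `t ↦ t ^ (β / 2)` and the
parallelogram law (`weight_add_le`, `barrier_symm_ge`); its integral is `w` times a constant that
does not depend on `λ`. Hence the gain dominates for small `λ`, and `w ≥ h x` concludes.
-/

open MeasureTheory Metric Set Filter

noncomputable section

/-! ### Superharmonicity of the half-line function on the line -/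

lemma hasDerivAt_frac {t : ℝ} (ht : 0 < 1 + t) :
    HasDerivAt (fun t : ℝ => t / (1 + t)) (1 / (1 + t) ^ 2) t := by
  have h := (hasDerivAt_id t).div ((hasDerivAt_id t).const_add 1) ht.ne'
  refine h.congr_deriv ?_
  simp

lemma frac_image {ε : ℝ} (hε : 0 < ε) (hε1 : ε < 1) :
    (fun t : ℝ => t / (1 + t)) '' Ioi (ε / (1 - ε)) = Ioo ε 1 := by
  have h1 : 0 < 1 - ε := by linarith
  ext y
  simp only [mem_image, mem_Ioi, mem_Ioo]
  constructor
  · rintro ⟨t, ht, rfl⟩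
    have ht0 : 0 < t := lt_trans (by positivity) ht
    rw [div_lt_iff₀ h1] at ht
    rw [lt_div_iff₀ (by linarith), div_lt_one (by linarith)]
    constructor <;> nlinarith
  · rintro ⟨hy, hy1⟩
    have hy2 : 0 < 1 - y := by linarith
    refine ⟨y / (1 - y), ?_, ?_⟩
    · rw [div_lt_div_iff₀ h1 hy2]; nlinarith
    · field_simp
      ring

lemma frac_pullback {s t : ℝ} (ht : 0 < t) :
    |1 / (1 + t) ^ 2| • (((1 - t / (1 + t)) ^ (2 * s - 1) - (1 - t / (1 + t)) ^ (s - 1)) *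
      (t / (1 + t)) ^ (-1 - 2 * s)) = (1 - (1 + t) ^ s) * t ^ (-1 - 2 * s) := by
  have h1 : 0 < 1 + t := by linarith
  have e : 1 - t / (1 + t) = (1 + t)⁻¹ := by field_simp; ring
  rw [e, abs_of_pos (by positivity), Real.div_rpow ht.le h1.le, Real.inv_rpow h1.le,
    Real.inv_rpow h1.le, ← Real.rpow_neg h1.le, ← Real.rpow_neg h1.le, smul_eq_mul, one_div,
    ← Real.rpow_natCast (1 + t) 2, ← Real.rpow_neg h1.le, div_eq_mul_inv, ← Real.rpow_neg h1.le]
  have e1 : (1 + t) ^ (-((2 : ℕ) : ℝ)) * (1 + t) ^ (-(2 * s - 1)) * (1 + t) ^ (-(-1 - 2 * s))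
      = 1 := by
    rw [← Real.rpow_add h1, ← Real.rpow_add h1,
      show (-((2 : ℕ) : ℝ)) + -(2 * s - 1) + -(-1 - 2 * s) = 0 by push_cast; ring, Real.rpow_zero]
  have e2 : (1 + t) ^ (-((2 : ℕ) : ℝ)) * (1 + t) ^ (-(s - 1)) * (1 + t) ^ (-(-1 - 2 * s))
      = (1 + t) ^ s := by
    rw [← Real.rpow_add h1, ← Real.rpow_add h1]
    congr 1; push_cast; ring
  linear_combination t ^ (-1 - 2 * s) * (e1 - e2)

/-- The map `t ↦ t / (1 + t)` carries the right half of the singular integral of `(1 + ·)₊ ^ s`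
onto an integral over a subinterval of `(0, 1)`. -/
lemma right_half_transform {s ε : ℝ} (hε : 0 < ε) (hε1 : ε < 1) :
    ∫ t in Ioi (ε / (1 - ε)), (1 - (1 + t) ^ s) * t ^ (-1 - 2 * s) =
      ∫ σ in Ioo ε 1, ((1 - σ) ^ (2 * s - 1) - (1 - σ) ^ (s - 1)) * σ ^ (-1 - 2 * s) := by
  have h1 : 0 < 1 - ε := by linarith
  have hp : 0 < ε / (1 - ε) := by positivity
  rw [← frac_image hε hε1, integral_image_eq_integral_abs_deriv_smul measurableSet_Ioi
    (f' := fun t => 1 / (1 + t) ^ 2)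
    (fun t ht => (hasDerivAt_frac (by have := hp.trans ht; linarith)).hasDerivWithinAt)]
  · refine setIntegral_congr_fun measurableSet_Ioi fun t ht => ?_
    exact (frac_pullback (hp.trans ht)).symm
  · intro a ha b hb hab
    have h2 : 0 < a := hp.trans ha
    have h3 : 0 < b := hp.trans hb
    simp only at hab
    rw [div_eq_div_iff (by linarith) (by linarith)] at hab
    linarith

lemma right_half_transform_integrable {s ε : ℝ} (hε : 0 < ε) (hε1 : ε < 1)
    (h : IntegrableOn (fun t : ℝ => (1 - (1 + t) ^ s) * t ^ (-1 - 2 * s)) (Ioi (ε / (1 - ε)))) :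
    IntegrableOn (fun σ : ℝ => ((1 - σ) ^ (2 * s - 1) - (1 - σ) ^ (s - 1)) * σ ^ (-1 - 2 * s))
      (Ioo ε 1) := by
  have h1 : 0 < 1 - ε := by linarith
  have hp : 0 < ε / (1 - ε) := by positivity
  rw [← frac_image hε hε1, integrableOn_image_iff_integrableOn_abs_deriv_smul measurableSet_Ioi
    (f' := fun t => 1 / (1 + t) ^ 2)
    (fun t ht => (hasDerivAt_frac (by have := hp.trans ht; linarith)).hasDerivWithinAt)]
  · refine h.congr_fun (fun t ht => ?_) measurableSet_Ioi
    exact (frac_pullback (hp.trans ht)).symm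
  · intro a ha b hb hab
    have h2 : 0 < a := hp.trans ha
    have h3 : 0 < b := hp.trans hb
    simp only at hab
    rw [div_eq_div_iff (by linarith) (by linarith)] at hab
    linarith

lemma integrableOn_right {s ε : ℝ} (hs : s ∈ Ioo (0 : ℝ) 1) (hε : 0 < ε) :
    IntegrableOn (fun t : ℝ => (1 - (1 + t) ^ s) * t ^ (-1 - 2 * s)) (Ioi ε) := by
  have hi : IntegrableOn (fun t : ℝ => t ^ (-1 - s)) (Ioi ε) :=
    integrableOn_Ioi_rpow_of_lt (by linarith [hs.1]) hε
  refine hi.mono' (by measurability) ?_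
  refine (ae_restrict_iff' measurableSet_Ioi).2 (ae_of_all _ fun t ht => ?_)
  have ht0 : 0 < t := hε.trans ht
  have h1 : 1 ≤ (1 + t) ^ s := Real.one_le_rpow (by linarith) hs.1.le
  have h2 : (1 + t) ^ s ≤ 1 + t ^ s := by
    simpa using Real.rpow_add_le_add_rpow zero_le_one ht0.le hs.1.le hs.2.le
  rw [Real.norm_eq_abs, abs_mul, abs_of_nonpos (by linarith), abs_of_pos (by positivity),
    show -1 - s = s + (-1 - 2 * s) by ring, Real.rpow_add ht0]
  gcongr
  linarith

lemma integrableOn_left {s ε : ℝ} (hs : s ∈ Ioo (0 : ℝ) 1) (hε : 0 < ε) :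
    IntegrableOn (fun t : ℝ => (1 - (max (1 - t) 0) ^ s) * t ^ (-1 - 2 * s)) (Ioi ε) := by
  have hi : IntegrableOn (fun t : ℝ => t ^ (-1 - 2 * s)) (Ioi ε) :=
    integrableOn_Ioi_rpow_of_lt (by linarith [hs.1]) hε
  refine hi.mono' (by measurability) ?_
  refine (ae_restrict_iff' measurableSet_Ioi).2 (ae_of_all _ fun t ht => ?_)
  have ht0 : 0 < t := hε.trans ht
  have h0 : 0 ≤ (max (1 - t) 0) ^ s := by positivity
  have h1 : (max (1 - t) 0) ^ s ≤ 1 :=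
    Real.rpow_le_one (le_max_right _ _) (max_le (by linarith) zero_le_one) hs.1.le
  rw [Real.norm_eq_abs, abs_mul, abs_of_nonneg (by linarith), abs_of_pos (by positivity)]
  exact mul_le_of_le_one_left (by positivity) (by linarith)

/-- After the substitution, the two halves of the singular integral add up to the derivative of
an explicit function. -/
lemma hasDerivAt_primitive {s σ : ℝ} (hs : s ∈ Ioo (0 : ℝ) 1) (h0 : 0 < σ) (h1 : σ < 1) :
    HasDerivAt (fun σ : ℝ => -(1 / (2 * s)) * ((1 - (1 - σ) ^ s) ^ 2 * σ ^ (-(2 * s))))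
      (((1 - σ) ^ (2 * s - 1) - (1 - σ) ^ (s - 1)) * σ ^ (-1 - 2 * s) +
        (1 - (1 - σ) ^ s) * σ ^ (-1 - 2 * s)) σ := by
  have hs0 : s ≠ 0 := hs.1.ne'
  have hd : 0 < 1 - σ := by linarith
  have ha : HasDerivAt (fun σ : ℝ => (1 - σ) ^ s) (-1 * s * (1 - σ) ^ (s - 1)) σ :=
    ((hasDerivAt_id σ).const_sub 1).rpow_const (Or.inl hd.ne')
  have hb : HasDerivAt (fun σ : ℝ => σ ^ (-(2 * s))) (-(2 * s) * σ ^ (-(2 * s) - 1)) σ :=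
    Real.hasDerivAt_rpow_const (Or.inl h0.ne')
  have h := (((ha.const_sub 1).pow 2).mul hb).const_mul (-(1 / (2 * s)))
  refine h.congr_deriv ?_
  have e1 : (1 - σ) ^ s = (1 - σ) ^ (s - 1) * (1 - σ) := by
    rw [← Real.rpow_add_one hd.ne']; ring_nf
  have e2 : (1 - σ) ^ (2 * s - 1) = (1 - σ) ^ (s - 1) * (1 - σ) ^ (s - 1) * (1 - σ) := by
    rw [← Real.rpow_add hd, ← Real.rpow_add_one hd.ne']; ring_nf
  have e3 : σ ^ (-(2 * s)) = σ ^ (-1 - 2 * s) * σ := by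
    rw [← Real.rpow_add_one h0.ne']; ring_nf
  have e4 : σ ^ (-(2 * s) - 1) = σ ^ (-1 - 2 * s) := by ring_nf
  simp only [Pi.pow_apply]
  rw [e4, e3, e2, e1]
  field_simp
  ring

/-- The truncated integrals over `{ν > ε}` of an integrable function converge to the full
integral. -/
lemma tendsto_setIntegral_lt {X : Type*} [MeasurableSpace X] {μ : Measure X} {f ν : X → ℝ}
    (hf : Integrable f μ) (hν : Measurable ν) (hpos : ∀ᵐ x ∂μ, 0 < ν x) :
    Tendsto (fun ε : ℝ => ∫ x in {x | ε < ν x}, f x ∂μ) (nhdsWithin 0 (Ioi 0))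
      (nhds (∫ x, f x ∂μ)) := by
  have hm : ∀ ε : ℝ, MeasurableSet {x | ε < ν x} := fun ε => measurableSet_lt measurable_const hν
  simp_rw [fun ε => (integral_indicator (μ := μ) (f := f) (hm ε)).symm]
  refine tendsto_integral_filter_of_dominated_convergence (fun x => ‖f x‖)
    (Eventually.of_forall fun ε => hf.aestronglyMeasurable.indicator (hm ε))
    (Eventually.of_forall fun ε => ae_of_all _ fun x => norm_indicator_le_norm_self _ _)
    hf.norm ?_
  filter_upwards [hpos] with x hx
  refine tendsto_const_nhds.congr' ?_
  filter_upwards [nhdsWithin_le_nhds (Iio_mem_nhds hx)] with ε hε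
  rw [indicator_of_mem]
  exact hε

/-- The integral of the second difference of `(1 + ·)₊ ^ s` over `t > ε` is nonnegative up to an
error vanishing with `ε`. The substitution sends `t > ε / (1 - ε)` to `ε < σ < 1`; the error is the
contribution of the leftover interval between `ε` and `ε / (1 - ε)`, of length `O(ε ^ 2)`. -/
lemma truncated_ge {s ε : ℝ} (hs : s ∈ Ioo (0 : ℝ) 1) (hε : 0 < ε) (hε1 : ε < 1 / 2) :
    -(2 * ε ^ (2 - 2 * s)) ≤
      ∫ t in Ioi ε, (2 - (1 + t) ^ s - (max (1 - t) 0) ^ s) * t ^ (-1 - 2 * s) := by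
  have h1 : 0 < 1 - ε := by linarith
  have hle : ε ≤ ε / (1 - ε) := by rw [le_div_iff₀ h1]; nlinarith
  have hA := integrableOn_right hs hε
  have hB := integrableOn_left hs hε
  have hp : 0 < ε / (1 - ε) := by positivity
  have hsplit : ∫ t in Ioi ε, (2 - (1 + t) ^ s - (max (1 - t) 0) ^ s) * t ^ (-1 - 2 * s) =
      (∫ t in Ioi ε, (1 - (1 + t) ^ s) * t ^ (-1 - 2 * s)) +
      ∫ t in Ioi ε, (1 - (max (1 - t) 0) ^ s) * t ^ (-1 - 2 * s) := by
    rw [← integral_add hA hB]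
    congr 1; ext t; ring
  have hAs : ∫ t in Ioi ε, (1 - (1 + t) ^ s) * t ^ (-1 - 2 * s) =
      (∫ t in Ioc ε (ε / (1 - ε)), (1 - (1 + t) ^ s) * t ^ (-1 - 2 * s)) +
      ∫ t in Ioi (ε / (1 - ε)), (1 - (1 + t) ^ s) * t ^ (-1 - 2 * s) := by
    rw [← Ioc_union_Ioi_eq_Ioi hle, setIntegral_union (Ioc_disjoint_Ioi le_rfl) measurableSet_Ioi
      (hA.mono_set Ioc_subset_Ioi_self) (hA.mono_set (Ioi_subset_Ioi hle))]
  have hBs : ∫ t in Ioi ε, (1 - (max (1 - t) 0) ^ s) * t ^ (-1 - 2 * s) =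
      (∫ t in Ioo ε 1, (1 - (1 - t) ^ s) * t ^ (-1 - 2 * s)) + 1 / (2 * s) := by
    rw [← Ioc_union_Ioi_eq_Ioi (by linarith : ε ≤ 1), setIntegral_union (Ioc_disjoint_Ioi le_rfl)
      measurableSet_Ioi (hB.mono_set Ioc_subset_Ioi_self)
      (hB.mono_set (Ioi_subset_Ioi (by linarith))), integral_Ioc_eq_integral_Ioo]
    congr 1
    · refine setIntegral_congr_fun measurableSet_Ioo fun t ht => ?_
      rw [max_eq_left (by linarith [ht.2])]
    · have : ∫ t in Ioi (1 : ℝ), (1 - (max (1 - t) 0) ^ s) * t ^ (-1 - 2 * s) =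
          ∫ t in Ioi (1 : ℝ), t ^ (-1 - 2 * s) := by
        refine setIntegral_congr_fun measurableSet_Ioi fun t ht => ?_
        rw [max_eq_right (by linarith [mem_Ioi.1 ht]), Real.zero_rpow hs.1.ne']
        ring
      rw [this, integral_Ioi_rpow_of_lt (by linarith [hs.1]) one_pos, Real.one_rpow]
      rw [show -1 - 2 * s + 1 = -(2 * s) by ring, neg_div_neg_eq]
  have hA2 := right_half_transform_integrable hε (by linarith) (hA.mono_set (Ioi_subset_Ioi hle))
  have hB2 : IntegrableOn (fun t : ℝ => (1 - (1 - t) ^ s) * t ^ (-1 - 2 * s)) (Ioo ε 1) := by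
    refine (hB.mono_set Ioo_subset_Ioi_self).congr_fun (fun t ht => ?_) measurableSet_Ioo
    simp only
    rw [max_eq_left (by linarith [ht.2])]
  -- The boundary value `-1 / (2 * s)` of the primitive at `1` cancels the contribution of `t > 1`
  -- in `hBs`.
  have hFTC : (∫ t in Ioo ε 1, ((1 - t) ^ (2 * s - 1) - (1 - t) ^ (s - 1)) * t ^ (-1 - 2 * s)) +
      (∫ t in Ioo ε 1, (1 - (1 - t) ^ s) * t ^ (-1 - 2 * s)) =
      -(1 / (2 * s)) - -(1 / (2 * s)) * ((1 - (1 - ε) ^ s) ^ 2 * ε ^ (-(2 * s))) := by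
    rw [← integral_add hA2 hB2, ← integral_Ioc_eq_integral_Ioo,
      ← intervalIntegral.integral_of_le (by linarith)]
    rw [intervalIntegral.integral_eq_sub_of_hasDerivAt_of_le (by linarith) ?_
      (fun t ht => hasDerivAt_primitive hs (hε.trans ht.1) ht.2) ?_]
    · simp [Real.zero_rpow hs.1.ne']
    · intro t ht
      have ht0 : t ≠ 0 := (lt_of_lt_of_le hε ht.1).ne'
      refine ContinuousAt.continuousWithinAt ?_
      have c1 : ContinuousAt (fun t : ℝ => (1 - t) ^ s) t :=
        (continuousAt_const.sub continuousAt_id).rpow_const (Or.inr hs.1.le)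
      have c2 : ContinuousAt (fun t : ℝ => t ^ (-(2 * s))) t :=
        continuousAt_id.rpow_const (Or.inl ht0)
      exact continuousAt_const.mul (((continuousAt_const.sub c1).pow 2).mul c2)
    · rw [intervalIntegrable_iff_integrableOn_Ioo_of_le (by linarith)]
      exact hA2.add hB2
  have hG : 0 ≤ 1 / (2 * s) * ((1 - (1 - ε) ^ s) ^ 2 * ε ^ (-(2 * s))) := by
    have := hs.1
    positivity
  have hleft : -(2 * ε ^ (2 - 2 * s)) ≤
      ∫ t in Ioc ε (ε / (1 - ε)), (1 - (1 + t) ^ s) * t ^ (-1 - 2 * s) := by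
    have hb : ∀ t ∈ Ioc ε (ε / (1 - ε)),
        ‖(1 - (1 + t) ^ s) * t ^ (-1 - 2 * s)‖ ≤ ε ^ (-(2 * s)) := by
      intro t ht
      have ht0 : 0 < t := hε.trans ht.1
      have h1 : 1 ≤ (1 + t) ^ s := Real.one_le_rpow (by linarith) hs.1.le
      have h2 : (1 + t) ^ s ≤ 1 + s * t :=
        rpow_one_add_le_one_add_mul_self (by linarith) hs.1.le hs.2.le
      have h3 : s * t ≤ t := mul_le_of_le_one_left ht0.le hs.2.le
      calc ‖(1 - (1 + t) ^ s) * t ^ (-1 - 2 * s)‖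
          = ((1 + t) ^ s - 1) * t ^ (-1 - 2 * s) := by
            rw [Real.norm_eq_abs, abs_mul, abs_of_nonpos (by linarith),
              abs_of_pos (by positivity)]
            ring
        _ ≤ t * t ^ (-1 - 2 * s) := by gcongr; linarith
        _ = t ^ (-(2 * s)) := by
            rw [mul_comm, ← Real.rpow_add_one ht0.ne']; ring_nf
        _ ≤ ε ^ (-(2 * s)) :=
            Real.rpow_le_rpow_of_nonpos hε ht.1.le (by linarith [hs.1])
    have h := norm_setIntegral_le_of_norm_le_const (μ := volume) (by simp) hb
    rw [Real.norm_eq_abs] at h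
    have h' := (abs_le.1 h).1
    refine le_trans ?_ h'
    rw [neg_le_neg_iff, Real.volume_real_Ioc_of_le hle]
    have e : ε / (1 - ε) - ε ≤ 2 * ε ^ (2 : ℕ) := by
      rw [sub_le_iff_le_add, div_le_iff₀ h1]; nlinarith [pow_pos hε 2]
    calc ε ^ (-(2 * s)) * (ε / (1 - ε) - ε) ≤ ε ^ (-(2 * s)) * (2 * ε ^ (2 : ℕ)) := by gcongr
      _ = 2 * ε ^ (2 - 2 * s) := by
        rw [sub_eq_neg_add, Real.rpow_add hε]
        norm_num
        ring
  rw [hsplit, hAs, hBs, right_half_transform hε (by linarith)]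
  linarith

/-- The function `(1 + ·)₊ ^ s` is `s`-superharmonic at `0` on the line. -/
lemma line_integral_nonneg {s : ℝ} (hs : s ∈ Ioo (0 : ℝ) 1) :
    0 ≤ ∫ t in Ioi (0 : ℝ), (2 - (1 + t) ^ s - (max (1 - t) 0) ^ s) * t ^ (-1 - 2 * s) := by
  -- Without integrability the integral is `0` by convention, so that case needs no proof of its own.
  by_cases hi : IntegrableOn
      (fun t : ℝ => (2 - (1 + t) ^ s - (max (1 - t) 0) ^ s) * t ^ (-1 - 2 * s)) (Ioi 0)
  · have h := tendsto_setIntegral_lt hi measurable_id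
      ((ae_restrict_iff' measurableSet_Ioi).2 (ae_of_all _ fun t ht => ht))
    have h0 : Tendsto (fun ε : ℝ => -(2 * ε ^ (2 - 2 * s))) (nhdsWithin 0 (Ioi 0)) (nhds 0) := by
      have : ContinuousAt (fun ε : ℝ => -(2 * ε ^ (2 - 2 * s))) 0 :=
        (continuousAt_const.mul
          (continuousAt_id.rpow_const (Or.inr (by linarith [hs.2])))).neg
      have h2 := this.tendsto
      rw [Real.zero_rpow (by linarith [hs.2]), mul_zero, neg_zero] at h2
      exact h2.mono_left nhdsWithin_le_nhds
    refine le_of_tendsto_of_tendsto h0 h ?_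
    filter_upwards [self_mem_nhdsWithin,
      nhdsWithin_le_nhds (Iio_mem_nhds (by norm_num : (0 : ℝ) < 1 / 2))] with ε he he1
    have e : {x : ℝ | ε < id x} ∩ Ioi 0 = Ioi ε := by
      ext x
      simp only [id, mem_inter_iff, mem_ofPred_eq, mem_Ioi]
      exact ⟨fun h => h.1, fun h => ⟨h, lt_trans he h⟩⟩
    rw [Measure.restrict_restrict (measurableSet_lt measurable_const measurable_id), e]
    exact truncated_ge hs he he1
  · rw [integral_undef hi]

/-! ### The fractional Laplacian through second differences -/

/-- A function that is quadratically small at the origin and of order `β < 2 * s` at infinity is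
integrable against the kernel `‖z‖ ^ (-(n + 2 * s))`. -/
lemma integrable_div_of_bounds {n : ℕ} (hn : 1 ≤ n) {s β K ρ : ℝ} (hs : s < 1) (hβ : β < 2 * s)
    (hρ : 0 < ρ) {F : EuclideanSpace ℝ (Fin n) → ℝ} (hF : Measurable F)
    (h1 : ∀ z, ‖z‖ ≤ ρ → |F z| ≤ K * ‖z‖ ^ 2) (h2 : ∀ z, ρ < ‖z‖ → |F z| ≤ K * ‖z‖ ^ β) :
    Integrable (fun z => F z / ‖z‖ ^ ((n : ℝ) + 2 * s)) := by
  have : Nonempty (Fin n) := ⟨⟨0, by omega⟩⟩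
  set f : ℝ → ℝ := fun r =>
    if r ≤ ρ then K * r ^ 2 / r ^ ((n : ℝ) + 2 * s) else K * r ^ β / r ^ ((n : ℝ) + 2 * s) with hf
  have hint : Integrable (fun z : EuclideanSpace ℝ (Fin n) => f ‖z‖) := by
    rw [integrable_fun_norm_addHaar (volume : Measure (EuclideanSpace ℝ (Fin n))) (f := f),
      finrank_euclideanSpace_fin, ← Ioc_union_Ioi_eq_Ioi hρ.le]
    have hpow : ∀ y : ℝ, 0 < y → y ^ (n - 1) = y ^ ((n : ℝ) - 1) := by
      intro y hy
      rw [← Real.rpow_natCast, Nat.cast_sub hn, Nat.cast_one]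
    refine IntegrableOn.union ?_ ?_
    · have hi : IntegrableOn (fun y : ℝ => y ^ (1 - 2 * s)) (Ioc 0 ρ) := by
        rw [← intervalIntegrable_iff_integrableOn_Ioc_of_le hρ.le]
        exact intervalIntegral.intervalIntegrable_rpow' (by linarith)
      refine IntegrableOn.congr_fun (hi.const_mul K) (fun y hy => ?_) measurableSet_Ioc
      simp only [hf, if_pos hy.2, smul_eq_mul]
      rw [hpow y hy.1, ← Real.rpow_natCast y 2, mul_div_assoc, ← Real.rpow_sub hy.1,
        mul_left_comm, ← Real.rpow_add hy.1]
      congr 2; push_cast; ring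
    · have hi : IntegrableOn (fun y : ℝ => y ^ (β - 1 - 2 * s)) (Ioi ρ) :=
        integrableOn_Ioi_rpow_of_lt (by linarith) hρ
      refine IntegrableOn.congr_fun (hi.const_mul K) (fun y hy => ?_) measurableSet_Ioi
      have hy0 : 0 < y := hρ.trans hy
      simp only [hf, if_neg (not_le.2 (mem_Ioi.1 hy)), smul_eq_mul]
      rw [hpow y hy0, mul_div_assoc, ← Real.rpow_sub hy0, mul_left_comm, ← Real.rpow_add hy0]
      congr 2; ring
  refine hint.mono' (hF.div (measurable_norm.pow_const _)).aestronglyMeasurable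
    (ae_of_all _ fun z => ?_)
  have hp : 0 ≤ ‖z‖ ^ ((n : ℝ) + 2 * s) := by positivity
  rw [Real.norm_eq_abs, abs_div, abs_of_nonneg hp]
  by_cases hz : ‖z‖ ≤ ρ
  · simp only [hf, if_pos hz]
    exact div_le_div_of_nonneg_right (h1 z hz) hp
  · simp only [hf, if_neg hz]
    exact div_le_div_of_nonneg_right (h2 z (not_le.1 hz)) hp

/-- The map `z ↦ u (x + z) + u (x - z)` has derivative `u' (x + z) - u' (x - z)`, which is `O(‖z‖)`
because the derivative of `u` is Lipschitz near `x`. -/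
lemma exists_secondDiff_le {E : Type*} [NormedAddCommGroup E] [NormedSpace ℝ E] {u : E → ℝ} {x : E}
    (hu : ContDiffAt ℝ 2 u x) :
    ∃ K ρ : ℝ, 0 ≤ K ∧ 0 < ρ ∧
      ∀ z, ‖z‖ ≤ ρ → |2 * u x - u (x + z) - u (x - z)| ≤ K * ‖z‖ ^ 2 := by
  obtain ⟨L, t, ht, hL⟩ :=
    (hu.fderiv_right (m := 1) (by norm_num)).exists_lipschitzOnWith
  have hd : ∀ᶠ y in nhds x, DifferentiableAt ℝ u y := by
    filter_upwards [hu.eventually (by simp)] with y hy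
    exact hy.differentiableAt (by norm_num)
  obtain ⟨r, hr, hball⟩ := Metric.nhds_basis_closedBall.mem_iff.1 (inter_mem ht hd)
  refine ⟨2 * L, r, by positivity, hr, fun z hz => ?_⟩
  have hmem : ∀ y ∈ closedBall (0 : E) ‖z‖, x + y ∈ closedBall x r ∧ x - y ∈ closedBall x r := by
    intro y hy
    rw [mem_closedBall_zero_iff] at hy
    constructor <;> simp [dist_eq_norm] <;> linarith
  have hder : ∀ y ∈ closedBall (0 : E) ‖z‖,
      HasFDerivWithinAt (fun y => u (x + y) + u (x - y)) (fderiv ℝ u (x + y) - fderiv ℝ u (x - y))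
        (closedBall 0 ‖z‖) y := by
    intro y hy
    obtain ⟨h1, h2⟩ := hmem y hy
    have d1 := (hball h1).2.hasFDerivAt.comp y ((hasFDerivAt_id (𝕜 := ℝ) y).const_add x)
    have d2 := (hball h2).2.hasFDerivAt.comp y ((hasFDerivAt_id (𝕜 := ℝ) y).const_sub x)
    refine ((d1.add d2).congr_fderiv ?_).hasFDerivWithinAt
    ext v
    simp [sub_eq_add_neg]
  have hbound : ∀ y ∈ closedBall (0 : E) ‖z‖,
      ‖fderiv ℝ u (x + y) - fderiv ℝ u (x - y)‖ ≤ 2 * L * ‖z‖ := by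
    intro y hy
    obtain ⟨h1, h2⟩ := hmem y hy
    have h := hL.dist_le_mul _ (hball h1).1 _ (hball h2).1
    rw [dist_eq_norm, dist_eq_norm, show x + y - (x - y) = (2 : ℝ) • y by rw [two_smul]; abel,
      norm_smul] at h
    rw [mem_closedBall_zero_iff] at hy
    refine h.trans ?_
    rw [Real.norm_two]
    have : (L : ℝ) * ‖y‖ ≤ L * ‖z‖ := by gcongr
    linarith
  have h := (convex_closedBall (0 : E) ‖z‖).norm_image_sub_le_of_norm_hasFDerivWithin_le hder hbound
    (mem_closedBall_self (norm_nonneg z)) (mem_closedBall_zero_iff.2 le_rfl)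
  simp only [add_zero, sub_zero] at h
  rw [Real.norm_eq_abs, abs_sub_comm] at h
  calc |2 * u x - u (x + z) - u (x - z)| = |u x + u x - (u (x + z) + u (x - z))| := by ring_nf
    _ ≤ 2 * L * ‖z‖ * ‖z‖ := h
    _ = 2 * L * ‖z‖ ^ 2 := by ring

lemma growth_shift {E : Type*} [NormedAddCommGroup E] {β K ρ : ℝ} {u : E → ℝ} (x : E)
    (hβ : 0 ≤ β) (hK : 0 ≤ K) (hρ : 0 < ρ) (hg : ∀ y, |u y| ≤ K * (1 + ‖y‖) ^ β) :
    ∃ M : ℝ, 0 ≤ M ∧ ∀ z, ρ < ‖z‖ →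
      |u x| ≤ M * ‖z‖ ^ β ∧ |u (x + z)| ≤ M * ‖z‖ ^ β ∧ |u (x - z)| ≤ M * ‖z‖ ^ β := by
  refine ⟨K * ((1 + ‖x‖) / ρ + 1) ^ β, by positivity, fun z hz => ?_⟩
  have hc : 1 + ‖x‖ + ‖z‖ ≤ ((1 + ‖x‖) / ρ + 1) * ‖z‖ := by
    have : 1 + ‖x‖ ≤ (1 + ‖x‖) / ρ * ‖z‖ := by
      rw [div_mul_eq_mul_div, le_div_iff₀ hρ]
      gcongr
    linarith
  have key : ∀ y, ‖y‖ ≤ ‖x‖ + ‖z‖ → |u y| ≤ K * ((1 + ‖x‖) / ρ + 1) ^ β * ‖z‖ ^ β := by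
    intro y hy
    refine (hg y).trans ?_
    rw [mul_assoc, ← Real.mul_rpow (by positivity) (by positivity)]
    gcongr
    linarith
  exact ⟨key _ (by linarith [norm_nonneg z]), key _ (norm_add_le _ _), key _ (norm_sub_le _ _)⟩

lemma integrable_secondDiff {n : ℕ} (hn : 1 ≤ n) {s β K : ℝ} (hs : s < 1) (hβ0 : 0 ≤ β)
    (hβ : β < 2 * s) (hK : 0 ≤ K) {u : EuclideanSpace ℝ (Fin n) → ℝ}
    {x : EuclideanSpace ℝ (Fin n)} (hm : Measurable u) (hu : ContDiffAt ℝ 2 u x)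
    (hg : ∀ y, |u y| ≤ K * (1 + ‖y‖) ^ β) :
    Integrable (fun z => (2 * u x - u (x + z) - u (x - z)) / ‖z‖ ^ ((n : ℝ) + 2 * s)) := by
  obtain ⟨K₁, ρ, hK₁, hρ, h1⟩ := exists_secondDiff_le hu
  obtain ⟨M, hM, h2⟩ := growth_shift x hβ0 hK hρ hg
  refine integrable_div_of_bounds (K := K₁ + 4 * M) hn hs hβ hρ (by fun_prop) ?_ ?_
  · intro z hz
    refine (h1 z hz).trans ?_
    gcongr
    linarith
  · intro z hz
    obtain ⟨a, b, c⟩ := h2 z hz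
    have hp : 0 ≤ K₁ * ‖z‖ ^ β := by positivity
    rw [abs_le] at a b c ⊢
    constructor <;> linarith [a.1, a.2, b.1, b.2, c.1, c.2]

/-- For a function that is `C²` at `x` and of order `β < 2 * s` at infinity, the principal value
exists and equals half of the absolutely convergent integral of second differences. -/
lemma hasFracLapAt_secondDiff {n : ℕ} (hn : 1 ≤ n) {s β K Cns : ℝ} (hs : s < 1) (hβ0 : 0 ≤ β)
    (hβ : β < 2 * s) (hK : 0 ≤ K) {u : EuclideanSpace ℝ (Fin n) → ℝ}
    {x : EuclideanSpace ℝ (Fin n)} (hm : Measurable u) (hu : ContDiffAt ℝ 2 u x)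
    (hg : ∀ y, |u y| ≤ K * (1 + ‖y‖) ^ β) :
    HasFracLapAt n s Cns u x
      (Cns * (1 / 2 * ∫ z, (2 * u x - u (x + z) - u (x - z)) / ‖z‖ ^ ((n : ℝ) + 2 * s))) := by
  have : Nonempty (Fin n) := ⟨⟨0, by omega⟩⟩
  have hD := integrable_secondDiff hn hs hβ0 hβ hK hm hu hg
  have hpos : ∀ᵐ z : EuclideanSpace ℝ (Fin n), 0 < ‖z‖ := by
    filter_upwards [compl_mem_ae_iff.2 (measure_singleton (0 : EuclideanSpace ℝ (Fin n)))]
      with z hz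
    exact norm_pos_iff.2 hz
  have ht := ((tendsto_setIntegral_lt hD measurable_norm hpos).const_mul (1 / 2)).const_mul Cns
  refine ht.congr' ?_
  filter_upwards [self_mem_nhdsWithin] with ε hε
  have hε0 : 0 < ε := hε
  congr 1
  set Φ : EuclideanSpace ℝ (Fin n) → ℝ := indicator {y | ε < dist x y}
    (fun y => (u x - u y) / dist x y ^ ((n : ℝ) + 2 * s)) with hΦ
  have hms : MeasurableSet {y | ε < dist x y} :=
    measurableSet_lt measurable_const (by fun_prop)
  have hmn : MeasurableSet {z : EuclideanSpace ℝ (Fin n) | ε < ‖z‖} :=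
    measurableSet_lt measurable_const measurable_norm
  have hΦi : Integrable (fun z => Φ (x + z)) := by
    obtain ⟨M, hM, h2⟩ := growth_shift x hβ0 hK hε0 hg
    have := integrable_div_of_bounds (K := 2 * M) (ρ := ε) hn hs hβ hε0
      (F := indicator {z | ε < ‖z‖} (fun z => u x - u (x + z)))
      (Measurable.indicator (by fun_prop) hmn) ?_ ?_
    · refine this.congr (ae_of_all _ fun z => ?_)
      by_cases hz : ε < ‖z‖ <;> simp [hΦ, indicator, hz]
    · intro z hz
      rw [indicator_of_notMem (by simpa using hz)]
      simp only [abs_zero]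
      positivity
    · intro z hz
      rw [indicator_of_mem (by simpa using hz)]
      obtain ⟨a, b, c⟩ := h2 z hz
      rw [abs_le] at a b ⊢
      constructor <;> linarith [a.1, a.2, b.1, b.2]
  have hΦ0 : Integrable Φ := by
    have := hΦi.comp_add_left (-x)
    simpa using this
  -- Half of the truncated integral is rewritten through `y = x + z` and half through `y = x - z`.
  have e1 : ∫ z, Φ (x + z) = ∫ y, Φ y := integral_add_left_eq_self Φ x
  have e2 : ∫ z, Φ (x - z) = ∫ y, Φ y := integral_sub_left_eq_self Φ volume x
  have e3 : (∫ z, Φ (x + z)) + (∫ z, Φ (x - z)) = ∫ z in {z | ε < ‖z‖},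
      (2 * u x - u (x + z) - u (x - z)) / ‖z‖ ^ ((n : ℝ) + 2 * s) := by
    rw [← integral_add hΦi (hΦ0.comp_sub_left x), ← integral_indicator hmn]
    congr 1
    ext z
    by_cases hz : ε < ‖z‖
    · simp [hΦ, indicator, hz]
      ring
    · simp [hΦ, indicator, hz]
  rw [← e3, e1, e2, ← integral_indicator hms]
  ring

/-! ### The half-space function in `ℝⁿ` -/

/-- The second difference `2 f 0 - f τ - f (-τ)` of the function `f τ = (1 + τ)₊ ^ s`. -/
def halfLineDiff (s τ : ℝ) : ℝ := 2 - (max (1 + τ) 0) ^ s - (max (1 - τ) 0) ^ s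

lemma halfLineDiff_abs (s τ : ℝ) : halfLineDiff s |τ| = halfLineDiff s τ := by
  unfold halfLineDiff
  rcases abs_cases τ with ⟨h, -⟩ | ⟨h, -⟩ <;> rw [h]
  rw [sub_neg_eq_add, ← sub_eq_add_neg]
  ring

lemma integrable_halfLineDiff {m : ℕ} {s : ℝ} (hs : s ∈ Ioo (0 : ℝ) 1) :
    Integrable (fun z : EuclideanSpace ℝ (Fin (m + 1)) =>
      halfLineDiff s (z 0) / ‖z‖ ^ (((m + 1 : ℕ) : ℝ) + 2 * s)) := by
  have hd : ContDiffAt ℝ 2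
      (fun y : EuclideanSpace ℝ (Fin (m + 1)) => (max (1 + y 0) 0) ^ s) 0 := by
    have hc : ContDiffAt ℝ 2 (fun y : EuclideanSpace ℝ (Fin (m + 1)) => (1 + y 0) ^ s) 0 :=
      ContDiffAt.rpow_const_of_ne (by fun_prop) (by simp)
    refine hc.congr_of_eventuallyEq ?_
    have h0 : ContinuousAt (fun y : EuclideanSpace ℝ (Fin (m + 1)) => 1 + y 0) 0 := by fun_prop
    filter_upwards [h0.eventually (lt_mem_nhds (a := 0) (by simp))] with y hy
    rw [max_eq_left hy.le]
  have h := integrable_secondDiff (K := 1) (x := 0) (by omega : 1 ≤ m + 1) hs.2 hs.1.le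
    (by linarith [hs.1]) zero_le_one (by fun_prop) hd ?_
  · refine h.congr (ae_of_all _ fun z => ?_)
    simp [halfLineDiff, sub_eq_add_neg]
  · intro y
    have hy := (abs_le.1 (PiLp.norm_apply_le (p := 2) y 0)).2
    rw [one_mul, abs_of_nonneg (by positivity)]
    have hs0 := hs.1
    gcongr
    exact max_le (by linarith) (by positivity)

/-- The integral of the kernel over a slice `z₁ = t`, by scaling in the remaining `m` variables. For
`p = m + 1 + 2 * s` it is a multiple of the one-dimensional kernel. -/
lemma integral_slice {m : ℕ} {p t : ℝ} (ht : t ≠ 0) :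
    ∫ ζ : Fin m → ℝ, 1 / √(t ^ 2 + ∑ i, ζ i ^ 2) ^ p =
      (∫ ζ : Fin m → ℝ, 1 / √(1 + ∑ i, ζ i ^ 2) ^ p) * |t| ^ ((m : ℝ) - p) := by
  have ht0 : 0 < |t| := abs_pos.2 ht
  have h := Measure.integral_comp_smul (volume : Measure (Fin m → ℝ))
    (fun ζ => 1 / √(t ^ 2 + ∑ i, ζ i ^ 2) ^ p) |t|
  have e : ∀ ζ : Fin m → ℝ, 1 / √(t ^ 2 + ∑ i, (|t| • ζ) i ^ 2) ^ p =
      1 / √(1 + ∑ i, ζ i ^ 2) ^ p * (|t| ^ p)⁻¹ := by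
    intro ζ
    have : t ^ 2 + ∑ i, (|t| • ζ) i ^ 2 = |t| ^ 2 * (1 + ∑ i, ζ i ^ 2) := by
      simp only [Pi.smul_apply, smul_eq_mul, mul_pow, sq_abs, mul_add, mul_one, Finset.mul_sum]
    rw [this, Real.sqrt_mul (by positivity), Real.sqrt_sq ht0.le,
      Real.mul_rpow ht0.le (Real.sqrt_nonneg _)]
    field_simp
  simp_rw [e] at h
  rw [integral_mul_const, Module.finrank_fin_fun, abs_of_nonneg (a := (|t| ^ m)⁻¹) (by positivity),
    smul_eq_mul] at h
  have h1 : |t| ^ p ≠ 0 := by positivity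
  rw [Real.rpow_sub ht0, Real.rpow_natCast, mul_div_assoc', mul_comm _ (|t| ^ m), mul_div_assoc,
    div_eq_mul_inv _ (|t| ^ p), h]
  field_simp

/-- The function `(1 + x₁)₊ ^ s` is `s`-superharmonic at the origin of `ℝⁿ`: integrating out the
variables `x'` reduces the claim to the line. -/
lemma integral_halfLineDiff_nonneg {m : ℕ} {s : ℝ} (hs : s ∈ Ioo (0 : ℝ) 1) :
    0 ≤ ∫ z : EuclideanSpace ℝ (Fin (m + 1)),
      halfLineDiff s (z 0) / ‖z‖ ^ (((m + 1 : ℕ) : ℝ) + 2 * s) := by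
  set p : ℝ := ((m + 1 : ℕ) : ℝ) + 2 * s with hp
  set f : ℝ × (Fin m → ℝ) → ℝ := fun q =>
    halfLineDiff s q.1 * (1 / √(q.1 ^ 2 + ∑ i, q.2 i ^ 2) ^ p) with hf
  set T : EuclideanSpace ℝ (Fin (m + 1)) ≃ᵐ ℝ × (Fin m → ℝ) :=
    (MeasurableEquiv.toLp 2 (Fin (m + 1) → ℝ)).symm.trans
      (MeasurableEquiv.piFinSuccAbove (fun _ => ℝ) 0) with hT
  have hTm : MeasurePreserving T volume volume :=
    (EuclideanSpace.volume_preserving_symm_measurableEquiv_toLp (Fin (m + 1))).trans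
      (volume_preserving_piFinSuccAbove (fun _ => ℝ) 0)
  have hcomp : ∀ z, halfLineDiff s (z 0) / ‖z‖ ^ p = f (T z) := by
    intro z
    have h1 : (T z).1 = z 0 := rfl
    have h2 : ∀ i, (T z).2 i = z i.succ := fun i => rfl
    simp only [hf, h1, h2]
    rw [EuclideanSpace.norm_eq, Fin.sum_univ_succ]
    simp only [Real.norm_eq_abs, sq_abs]
    ring
  have hint : Integrable f (volume.prod volume) := by
    have h := integrable_halfLineDiff (m := m) hs
    rw [← hp] at h
    simp_rw [hcomp] at h
    exact (hTm.integrable_comp_emb T.measurableEmbedding).1 h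
  simp_rw [hcomp]
  rw [hTm.integral_comp T.measurableEmbedding f]
  change 0 ≤ ∫ q, f q ∂(volume.prod volume)
  rw [integral_prod f hint]
  have hc : 0 ≤ ∫ ζ : Fin m → ℝ, 1 / √(1 + ∑ i, ζ i ^ 2) ^ p :=
    integral_nonneg fun ζ => by positivity
  have hinner : ∀ᵐ t : ℝ, ∫ ζ, f (t, ζ) =
      (fun r => (∫ ζ : Fin m → ℝ, 1 / √(1 + ∑ i, ζ i ^ 2) ^ p) *
        (halfLineDiff s r * r ^ (-1 - 2 * s))) |t| := by
    filter_upwards [compl_mem_ae_iff.2 (measure_singleton (0 : ℝ))] with t ht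
    simp only [hf]
    rw [integral_const_mul, integral_slice ht, halfLineDiff_abs,
      show (m : ℝ) - p = -1 - 2 * s by rw [hp]; push_cast; ring]
    ring
  rw [integral_congr_ae hinner]
  refine le_of_le_of_eq ?_ (integral_comp_abs
    (f := fun r => (∫ ζ : Fin m → ℝ, 1 / √(1 + ∑ i, ζ i ^ 2) ^ p) *
      (halfLineDiff s r * r ^ (-1 - 2 * s)))).symm
  rw [integral_const_mul]
  refine mul_nonneg zero_le_two (mul_nonneg hc ?_)
  refine (line_integral_nonneg hs).trans_eq (setIntegral_congr_fun measurableSet_Ioi fun t ht => ?_)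
  have ht0 : (0 : ℝ) < t := ht
  simp only [halfLineDiff]
  rw [max_eq_left (by linarith : (0 : ℝ) ≤ 1 + t)]

lemma halfLineDiff_scaled {m : ℕ} {s θ : ℝ} (hs : s ∈ Ioo (0 : ℝ) 1) (hθ : 0 < θ) :
    Integrable (fun z : EuclideanSpace ℝ (Fin (m + 1)) =>
      halfLineDiff s (θ * z 0) / ‖z‖ ^ (((m + 1 : ℕ) : ℝ) + 2 * s)) ∧
    0 ≤ ∫ z : EuclideanSpace ℝ (Fin (m + 1)),
      halfLineDiff s (θ * z 0) / ‖z‖ ^ (((m + 1 : ℕ) : ℝ) + 2 * s) := by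
  have e : (fun z : EuclideanSpace ℝ (Fin (m + 1)) =>
      halfLineDiff s (θ * z 0) / ‖z‖ ^ (((m + 1 : ℕ) : ℝ) + 2 * s)) =
      fun z => θ ^ (((m + 1 : ℕ) : ℝ) + 2 * s) *
        (fun z : EuclideanSpace ℝ (Fin (m + 1)) =>
          halfLineDiff s (z 0) / ‖z‖ ^ (((m + 1 : ℕ) : ℝ) + 2 * s)) (θ • z) := by
    ext z
    simp only [PiLp.smul_apply, smul_eq_mul, norm_smul, Real.norm_eq_abs, abs_of_pos hθ]
    rw [Real.mul_rpow hθ.le (norm_nonneg _)]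
    have : θ ^ (((m + 1 : ℕ) : ℝ) + 2 * s) ≠ 0 := by positivity
    field_simp
  rw [e]
  refine ⟨((integrable_halfLineDiff hs).comp_smul hθ.ne').const_mul _, ?_⟩
  rw [integral_const_mul, Measure.integral_comp_smul volume
    (fun z : EuclideanSpace ℝ (Fin (m + 1)) =>
      halfLineDiff s (z 0) / ‖z‖ ^ (((m + 1 : ℕ) : ℝ) + 2 * s)) θ]
  have := integral_halfLineDiff_nonneg (m := m) hs
  positivity

/-! ### The barrier -/

/-- The squared norm of `x'`, the part of `x` orthogonal to the first axis. -/
def tangSq {m : ℕ} (z : EuclideanSpace ℝ (Fin (m + 1))) : ℝ :=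
  ∑ i ∈ Finset.univ.erase (0 : Fin (m + 1)), (z i) ^ 2

/-- The profile of the barrier across the slab. -/
def profile (s lam t : ℝ) : ℝ := (max (1 - t ^ 2 / lam ^ 2) 0) ^ s

/-- The barrier function, as the product of its profile and its tangential weight. -/
def barrier {m : ℕ} (s β lam : ℝ) (z : EuclideanSpace ℝ (Fin (m + 1))) : ℝ :=
  profile s lam (z 0) * (1 + tangSq z) ^ (β / 2)

/-- The reflection of `ℝⁿ` in the hyperplane `x₁ = 0`. -/
def reflectFirst (m : ℕ) : EuclideanSpace ℝ (Fin (m + 1)) ≃ₗᵢ[ℝ] EuclideanSpace ℝ (Fin (m + 1)) :=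
  LinearIsometryEquiv.piLpCongrRight 2
    (fun i => if i = 0 then LinearIsometryEquiv.neg ℝ else LinearIsometryEquiv.refl ℝ ℝ)

lemma reflectFirst_zero {m : ℕ} (z : EuclideanSpace ℝ (Fin (m + 1))) : reflectFirst m z 0 = -z 0 := by
  simp [reflectFirst]

lemma reflectFirst_ne {m : ℕ} (z : EuclideanSpace ℝ (Fin (m + 1))) {i : Fin (m + 1)} (hi : i ≠ 0) :
    reflectFirst m z i = z i := by
  simp [reflectFirst, hi]

lemma tangSq_nonneg {m : ℕ} (z : EuclideanSpace ℝ (Fin (m + 1))) : 0 ≤ tangSq z :=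
  Finset.sum_nonneg fun _ _ => sq_nonneg _

lemma tangSq_le {m : ℕ} (z : EuclideanSpace ℝ (Fin (m + 1))) : tangSq z ≤ ‖z‖ ^ 2 := by
  rw [EuclideanSpace.real_norm_sq_eq, ← Finset.add_sum_erase _ _ (Finset.mem_univ 0)]
  have := sq_nonneg (z 0)
  simp only [tangSq]
  linarith

lemma measurable_tangSq {m : ℕ} :
    Measurable (tangSq : EuclideanSpace ℝ (Fin (m + 1)) → ℝ) := by
  unfold tangSq
  fun_prop

lemma tangSq_add_reflect {m : ℕ} (x z : EuclideanSpace ℝ (Fin (m + 1))) :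
    tangSq (x + reflectFirst m z) = tangSq (x + z) :=
  Finset.sum_congr rfl fun i hi => by
    rw [PiLp.add_apply, PiLp.add_apply, reflectFirst_ne z (Finset.ne_of_mem_erase hi)]

lemma tangSq_sub_reflect {m : ℕ} (x z : EuclideanSpace ℝ (Fin (m + 1))) :
    tangSq (x - reflectFirst m z) = tangSq (x - z) :=
  Finset.sum_congr rfl fun i hi => by
    rw [PiLp.sub_apply, PiLp.sub_apply, reflectFirst_ne z (Finset.ne_of_mem_erase hi)]

lemma tangSq_parallelogram {m : ℕ} (x z : EuclideanSpace ℝ (Fin (m + 1))) :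
    tangSq (x + z) + tangSq (x - z) = 2 * tangSq x + 2 * tangSq z := by
  simp only [tangSq, Finset.mul_sum, ← Finset.sum_add_distrib, PiLp.add_apply, PiLp.sub_apply]
  exact Finset.sum_congr rfl fun i _ => by ring

/-- Concavity of `t ↦ t ^ γ` for `γ ≤ 1`, together with the parallelogram law, bounds the second
difference of the weight by a multiple of the weight itself, uniformly in `x`. -/
lemma weight_add_le {m : ℕ} {γ : ℝ} (h0 : 0 ≤ γ) (h1 : γ ≤ 1)
    (x z : EuclideanSpace ℝ (Fin (m + 1))) :
    (1 + tangSq (x + z)) ^ γ + (1 + tangSq (x - z)) ^ γ ≤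
      2 * ((1 + tangSq x) ^ γ * (1 + tangSq z) ^ γ) := by
  have a := tangSq_nonneg (x + z)
  have b := tangSq_nonneg (x - z)
  have c := tangSq_nonneg x
  have d := tangSq_nonneg z
  have hp := tangSq_parallelogram x z
  have h := (Real.concaveOn_rpow h0 h1).2
    (mem_Ici.2 (by linarith : (0 : ℝ) ≤ 1 + tangSq (x + z)))
    (mem_Ici.2 (by linarith : (0 : ℝ) ≤ 1 + tangSq (x - z)))
    (by norm_num : (0 : ℝ) ≤ 1 / 2) (by norm_num : (0 : ℝ) ≤ 1 / 2) (by norm_num)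
  simp only [smul_eq_mul] at h
  have h2 : (1 / 2 * (1 + tangSq (x + z)) + 1 / 2 * (1 + tangSq (x - z))) ^ γ ≤
      ((1 + tangSq x) * (1 + tangSq z)) ^ γ := by
    refine Real.rpow_le_rpow (by linarith) ?_ h0
    nlinarith [mul_nonneg c d]
  rw [Real.mul_rpow (by linarith) (by linarith)] at h2
  linarith

lemma profile_nonneg (s lam t : ℝ) : 0 ≤ profile s lam t :=
  Real.rpow_nonneg (le_max_right _ _) _

lemma profile_le_one {s : ℝ} (hs : 0 ≤ s) (lam t : ℝ) : profile s lam t ≤ 1 := by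
  refine Real.rpow_le_one (le_max_right _ _) (max_le ?_ zero_le_one) hs
  have : 0 ≤ t ^ 2 / lam ^ 2 := by positivity
  linarith

/-- Since `1 - t² / λ²` lies below its tangent line at `a`, the profile lies below a multiple of
`(1 + ·)₊ ^ s` composed with an affine map, with equality at `a`. -/
lemma profile_le_halfLine {s lam a : ℝ} (hs : 0 ≤ s) (h0 : 0 < a) (h1 : a < lam) (t : ℝ) :
    profile s lam (a + t) ≤
      (1 - a ^ 2 / lam ^ 2) ^ s * (max (1 - 2 * a / (lam ^ 2 - a ^ 2) * t) 0) ^ s := by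
  have hl : 0 < lam := h0.trans h1
  have hla : 0 < lam ^ 2 - a ^ 2 := by nlinarith
  have hδ : 0 ≤ 1 - a ^ 2 / lam ^ 2 := by
    rw [sub_nonneg, div_le_one (by positivity)]; linarith
  rw [← Real.mul_rpow hδ (le_max_right _ _), profile]
  refine Real.rpow_le_rpow (le_max_right _ _) (max_le ?_ ?_) hs
  · refine le_trans ?_ (mul_le_mul_of_nonneg_left (le_max_left _ _) hδ)
    have e : (1 - a ^ 2 / lam ^ 2) * (1 - 2 * a / (lam ^ 2 - a ^ 2) * t) =
        1 - (a + t) ^ 2 / lam ^ 2 + t ^ 2 / lam ^ 2 := by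
      have : lam ^ 2 - a ^ 2 ≠ 0 := hla.ne'
      field_simp
      ring
    rw [e]
    have : 0 ≤ t ^ 2 / lam ^ 2 := by positivity
    linarith
  · exact mul_nonneg hδ (le_max_right _ _)

/-- The second difference of the profile at `a` dominates that of the comparison function, by at
least `1` where `2 * lam < t`: there `a - t` is outside the slab, and the comparison function is at
least `1`. -/
lemma profile_secondDiff_ge {s lam a : ℝ} (hs : 0 < s) (h0 : 0 < a) (h1 : a < lam) (t : ℝ) :
    (1 - a ^ 2 / lam ^ 2) ^ s * halfLineDiff s (2 * a / (lam ^ 2 - a ^ 2) * t) +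
        (if 2 * lam < t then 1 else 0) ≤
      2 * profile s lam a - profile s lam (a + t) - profile s lam (a - t) := by
  have hl : 0 < lam := h0.trans h1
  have hla : 0 < lam ^ 2 - a ^ 2 := by nlinarith
  have hδ : 0 ≤ 1 - a ^ 2 / lam ^ 2 := by
    rw [sub_nonneg, div_le_one (by positivity)]; linarith
  have ha : profile s lam a = (1 - a ^ 2 / lam ^ 2) ^ s := by
    rw [profile, max_eq_left hδ]
  have hp := profile_le_halfLine hs.le h0 h1 t
  have hm := profile_le_halfLine hs.le h0 h1 (-t)
  rw [mul_neg, sub_neg_eq_add, ← sub_eq_add_neg] at hm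
  rw [ha, halfLineDiff]
  split_ifs with ht
  · have hz : profile s lam (a - t) = 0 := by
      rw [profile, max_eq_right, Real.zero_rpow hs.ne']
      rw [sub_nonpos, one_le_div (by positivity)]
      nlinarith
    have hone : 1 ≤ (1 - a ^ 2 / lam ^ 2) ^ s *
        (max (1 + 2 * a / (lam ^ 2 - a ^ 2) * t) 0) ^ s := by
      rw [← Real.mul_rpow hδ (le_max_right _ _)]
      refine Real.one_le_rpow ?_ hs.le
      refine le_trans ?_ (mul_le_mul_of_nonneg_left (le_max_left _ _) hδ)
      have e : (1 - a ^ 2 / lam ^ 2) * (1 + 2 * a / (lam ^ 2 - a ^ 2) * t) =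
          1 + a * (2 * t - a) / lam ^ 2 := by
        have : lam ^ 2 - a ^ 2 ≠ 0 := hla.ne'
        field_simp
        ring
      rw [e]
      have : 0 ≤ a * (2 * t - a) / lam ^ 2 :=
        div_nonneg (mul_nonneg h0.le (by linarith)) (by positivity)
      linarith
    rw [hz]
    nlinarith
  · nlinarith

/-- The bound for the second differences of the barrier, symmetrized under `reflectFirst`:
a superharmonic part, a strictly positive gain, and a tangential error. -/
lemma barrier_symm_ge {m : ℕ} {s β lam : ℝ} (hs : 0 < s) (hβ0 : 0 ≤ β) (hβ2 : β ≤ 2)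
    {x : EuclideanSpace ℝ (Fin (m + 1))} (h0 : 0 < x 0) (h1 : x 0 < lam)
    (z : EuclideanSpace ℝ (Fin (m + 1))) :
    2 * ((1 + tangSq x) ^ (β / 2) * ((1 - x 0 ^ 2 / lam ^ 2) ^ s *
        halfLineDiff s (2 * x 0 / (lam ^ 2 - x 0 ^ 2) * z 0) +
        (if 2 * lam < z 0 then 1 else 0) - 2 * ((1 + tangSq z) ^ (β / 2) - 1))) ≤
      (2 * barrier s β lam x - barrier s β lam (x + z) - barrier s β lam (x - z)) +
      (2 * barrier s β lam x - barrier s β lam (x + reflectFirst m z) -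
        barrier s β lam (x - reflectFirst m z)) := by
  have hw := weight_add_le (by linarith : 0 ≤ β / 2) (by linarith) x z
  have hp := profile_secondDiff_ge hs h0 h1 (z 0)
  simp only [barrier, tangSq_add_reflect, tangSq_sub_reflect, PiLp.add_apply, PiLp.sub_apply, reflectFirst_zero,
    sub_neg_eq_add, ← sub_eq_add_neg]
  have p0 := profile_nonneg s lam (x 0 + z 0)
  have m0 := profile_nonneg s lam (x 0 - z 0)
  have p1 := profile_le_one hs.le lam (x 0 + z 0)
  have m1 := profile_le_one hs.le lam (x 0 - z 0)
  have w0 : 0 ≤ (1 + tangSq x) ^ (β / 2) :=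
    Real.rpow_nonneg (by linarith [tangSq_nonneg x]) _
  have e0 : 1 ≤ (1 + tangSq z) ^ (β / 2) :=
    Real.one_le_rpow (by linarith [tangSq_nonneg z]) (by linarith)
  generalize (1 + tangSq x) ^ (β / 2) = w at *
  generalize (1 + tangSq z) ^ (β / 2) = e at *
  generalize (1 + tangSq (x + z)) ^ (β / 2) = wp at *
  generalize (1 + tangSq (x - z)) ^ (β / 2) = wm at *
  generalize profile s lam (x 0 + z 0) = gp at *
  generalize profile s lam (x 0 - z 0) = gm at *
  generalize profile s lam (x 0) = g at *
  have k1 := mul_le_mul_of_nonneg_left hw (add_nonneg p0 m0)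
  have k2 := mul_le_mul_of_nonneg_left hp w0
  have k3 : (gp + gm) * (w * (e - 1)) ≤ 2 * (w * (e - 1)) :=
    mul_le_mul_of_nonneg_right (by linarith) (mul_nonneg w0 (by linarith))
  linarith

lemma measurable_barrier {m : ℕ} (s β lam : ℝ) :
    Measurable (barrier s β lam : EuclideanSpace ℝ (Fin (m + 1)) → ℝ) := by
  have := measurable_tangSq (m := m)
  unfold barrier profile
  fun_prop

lemma contDiffAt_barrier {m : ℕ} {s β lam : ℝ} {x : EuclideanSpace ℝ (Fin (m + 1))}
    (h0 : 0 < x 0) (h1 : x 0 < lam) : ContDiffAt ℝ 2 (barrier s β lam) x := by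
  have hl : 0 < lam := h0.trans h1
  have hx : 0 < 1 - x 0 ^ 2 / lam ^ 2 := by
    rw [sub_pos, div_lt_one (by positivity)]; nlinarith
  have hc : ContDiffAt ℝ 2 (fun z : EuclideanSpace ℝ (Fin (m + 1)) => 1 - z 0 ^ 2 / lam ^ 2) x := by
    fun_prop
  refine ContDiffAt.mul ?_ ?_
  · refine (hc.rpow_const_of_ne (p := s) hx.ne').congr_of_eventuallyEq ?_
    filter_upwards [hc.continuousAt.eventually (lt_mem_nhds hx)] with y hy
    rw [profile, max_eq_left hy.le]
  · refine ContDiffAt.rpow_const_of_ne ?_ (by linarith [tangSq_nonneg x])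
    unfold tangSq
    fun_prop

lemma barrier_growth {m : ℕ} {s β lam : ℝ} (hs : 0 ≤ s) (hβ : 0 ≤ β)
    (y : EuclideanSpace ℝ (Fin (m + 1))) : |barrier s β lam y| ≤ 1 * (1 + ‖y‖) ^ β := by
  have hq := tangSq_nonneg y
  have hw : 0 ≤ (1 + tangSq y) ^ (β / 2) := Real.rpow_nonneg (by linarith) _
  rw [barrier, abs_of_nonneg (mul_nonneg (profile_nonneg _ _ _) hw)]
  refine mul_le_mul (profile_le_one hs _ _) ?_ hw zero_le_one
  have e : (1 + ‖y‖) ^ β = ((1 + ‖y‖) ^ 2) ^ (β / 2) := by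
    rw [← Real.rpow_natCast (1 + ‖y‖) 2, ← Real.rpow_mul (by positivity)]
    congr 1; push_cast; ring
  rw [e]
  refine Real.rpow_le_rpow (by linarith) ?_ (by linarith)
  nlinarith [tangSq_le y, norm_nonneg y]

lemma integrable_tangError {m : ℕ} {s β : ℝ} (hs : s < 1) (hβ0 : 0 ≤ β) (hβ : β < 2 * s) :
    Integrable (fun z : EuclideanSpace ℝ (Fin (m + 1)) =>
      ((1 + tangSq z) ^ (β / 2) - 1) / ‖z‖ ^ (((m + 1 : ℕ) : ℝ) + 2 * s)) := by
  have hm := measurable_tangSq (m := m)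
  have e0 : ∀ z : EuclideanSpace ℝ (Fin (m + 1)), 1 ≤ (1 + tangSq z) ^ (β / 2) := fun z =>
    Real.one_le_rpow (by linarith [tangSq_nonneg z]) (by linarith)
  refine integrable_div_of_bounds (K := 1) (ρ := 1) (by omega) hs hβ one_pos (by fun_prop) ?_ ?_
  · intro z _
    have hq := tangSq_nonneg z
    have h := rpow_one_add_le_one_add_mul_self (s := tangSq z) (by linarith)
      (by linarith : 0 ≤ β / 2) (by linarith)
    rw [abs_of_nonneg (by linarith [e0 z])]
    have : β / 2 * tangSq z ≤ tangSq z := mul_le_of_le_one_left hq (by linarith)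
    linarith [tangSq_le z]
  · intro z _
    have hq := tangSq_nonneg z
    have h := Real.rpow_add_le_add_rpow zero_le_one hq
      (by linarith : 0 ≤ β / 2) (by linarith)
    rw [Real.one_rpow] at h
    have h2 : tangSq z ^ (β / 2) ≤ ‖z‖ ^ β := by
      have : ‖z‖ ^ β = (‖z‖ ^ 2) ^ (β / 2) := by
        rw [← Real.rpow_natCast ‖z‖ 2, ← Real.rpow_mul (by positivity)]
        congr 1; push_cast; ring
      rw [this]
      exact Real.rpow_le_rpow hq (tangSq_le z) (by linarith)
    rw [abs_of_nonneg (by linarith [e0 z])]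
    linarith

lemma integrable_gain {m : ℕ} {s lam : ℝ} (hs : s ∈ Ioo (0 : ℝ) 1) (hl : 0 < lam) :
    Integrable (fun z : EuclideanSpace ℝ (Fin (m + 1)) =>
      (if 2 * lam < z 0 then (1 : ℝ) else 0) / ‖z‖ ^ (((m + 1 : ℕ) : ℝ) + 2 * s)) := by
  refine integrable_div_of_bounds (K := 1) (ρ := lam) (β := 0) (by omega) hs.2
    (by linarith [hs.1]) hl ?_ ?_ ?_
  · exact Measurable.ite (measurableSet_lt measurable_const (by fun_prop)) measurable_const
      measurable_const
  · intro z hz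
    have hy := (abs_le.1 (PiLp.norm_apply_le (p := 2) z 0)).2
    rw [if_neg (by linarith), abs_zero]
    positivity
  · intro z _
    split_ifs <;> simp

/-- The set `2 * lam < z 0` contains the ball of radius `lam` about `(3 * lam, 0)`, on which the
kernel is at least `(4 * lam) ^ (-p)`. -/
lemma integral_gain_ge {m : ℕ} {s : ℝ} (hs : s ∈ Ioo (0 : ℝ) 1) :
    ∃ c : ℝ, 0 < c ∧ ∀ lam : ℝ, 0 < lam → c / lam ^ (2 * s) ≤
      ∫ z : EuclideanSpace ℝ (Fin (m + 1)),
        (if 2 * lam < z 0 then (1 : ℝ) else 0) / ‖z‖ ^ (((m + 1 : ℕ) : ℝ) + 2 * s) := by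
  set p : ℝ := ((m + 1 : ℕ) : ℝ) + 2 * s with hp
  set V : ℝ := (volume : Measure (EuclideanSpace ℝ (Fin (m + 1)))).real (ball 0 1) with hV
  have hVpos : 0 < V :=
    ENNReal.toReal_pos (measure_ball_pos _ _ one_pos).ne' measure_ball_lt_top.ne
  refine ⟨V / 4 ^ p, by positivity, fun lam hl => ?_⟩
  set B : Set (EuclideanSpace ℝ (Fin (m + 1))) :=
    ball (EuclideanSpace.single 0 (3 * lam)) lam with hB
  have hvol : (volume : Measure (EuclideanSpace ℝ (Fin (m + 1)))).real B = lam ^ (m + 1) * V := by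
    rw [hB, Measure.real, Measure.addHaar_ball _ _ hl.le, ENNReal.toReal_mul,
      ENNReal.toReal_ofReal (by positivity), finrank_euclideanSpace_fin]
    rfl
  have hmem : ∀ z ∈ B, 2 * lam < z 0 ∧ ‖z‖ ≤ 4 * lam := by
    intro z hz
    rw [hB, mem_ball, dist_eq_norm] at hz
    have h1 := (abs_le.1 (PiLp.norm_apply_le (p := 2) (z - EuclideanSpace.single 0 (3 * lam)) 0)).1
    have h2 := norm_add_le (z - EuclideanSpace.single 0 (3 * lam))
      (EuclideanSpace.single 0 (3 * lam))
    rw [sub_add_cancel, PiLp.norm_single, Real.norm_eq_abs, abs_of_pos (by positivity)] at h2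
    simp at h1
    constructor <;> linarith
  have hI := integrable_gain (m := m) hs hl
  rw [← hp] at hI
  have hnn : ∀ z : EuclideanSpace ℝ (Fin (m + 1)),
      0 ≤ (if 2 * lam < z 0 then (1 : ℝ) else 0) / ‖z‖ ^ p := by
    intro z
    split_ifs <;> positivity
  have hpow : V / 4 ^ p / lam ^ (2 * s) = 1 / (4 * lam) ^ p *
      (volume : Measure (EuclideanSpace ℝ (Fin (m + 1)))).real B := by
    rw [hvol, Real.mul_rpow (by norm_num) hl.le, hp, Real.rpow_add hl, Real.rpow_natCast]
    field_simp
  rw [hpow]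
  refine le_trans ?_ (setIntegral_le_integral (s := B) hI (ae_of_all _ hnn))
  refine setIntegral_ge_of_const_le_real measurableSet_ball measure_ball_lt_top.ne ?_ hI.integrableOn
  intro z hz
  obtain ⟨h1, h2⟩ := hmem z hz
  have hz0 : 0 < ‖z‖ := by
    have := (abs_le.1 (PiLp.norm_apply_le (p := 2) z 0)).2
    linarith
  have hp0 : 0 ≤ p := by have := hs.1; positivity
  rw [if_pos h1]
  gcongr

/-- The integrated form of `barrier_symm_ge`, in which the superharmonic part is discarded. -/
lemma barrier_integral_ge {m : ℕ} {s β lam : ℝ} (hs : s ∈ Ioo (0 : ℝ) 1)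
    (hβ : β ∈ Ioo 0 (2 * s)) {x : EuclideanSpace ℝ (Fin (m + 1))} (h0 : 0 < x 0)
    (h1 : x 0 < lam) :
    (1 + tangSq x) ^ (β / 2) *
      ((∫ z : EuclideanSpace ℝ (Fin (m + 1)),
        (if 2 * lam < z 0 then (1 : ℝ) else 0) / ‖z‖ ^ (((m + 1 : ℕ) : ℝ) + 2 * s)) -
      2 * ∫ z : EuclideanSpace ℝ (Fin (m + 1)),
        ((1 + tangSq z) ^ (β / 2) - 1) / ‖z‖ ^ (((m + 1 : ℕ) : ℝ) + 2 * s)) ≤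
    ∫ z, (2 * barrier s β lam x - barrier s β lam (x + z) - barrier s β lam (x - z)) /
      ‖z‖ ^ (((m + 1 : ℕ) : ℝ) + 2 * s) := by
  have hl : 0 < lam := h0.trans h1
  have hla : 0 < lam ^ 2 - x 0 ^ 2 := by nlinarith
  have hδ : 0 ≤ 1 - x 0 ^ 2 / lam ^ 2 := by
    rw [sub_nonneg, div_le_one (by positivity)]; linarith
  obtain ⟨hQ, hQ0⟩ := halfLineDiff_scaled (m := m) hs
    (by positivity : 0 < 2 * x 0 / (lam ^ 2 - x 0 ^ 2))
  have hG := integrable_gain (m := m) hs hl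
  have hE := integrable_tangError (m := m) hs.2 hβ.1.le hβ.2
  have hD := integrable_secondDiff (by omega) hs.2 hβ.1.le hβ.2 zero_le_one
    (measurable_barrier s β lam) (contDiffAt_barrier (β := β) h0 h1)
    (barrier_growth (m := m) hs.1.le hβ.1.le)
  have hmp := (reflectFirst m).measurePreserving
  have hemb : MeasurableEmbedding (reflectFirst m) := (reflectFirst m).toHomeomorph.measurableEmbedding
  have hDf := (hmp.integrable_comp_emb hemb).2 hD
  have hDi := hmp.integral_comp hemb (fun z : EuclideanSpace ℝ (Fin (m + 1)) =>
    (2 * barrier s β lam x - barrier s β lam (x + z) - barrier s β lam (x - z)) /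
      ‖z‖ ^ (((m + 1 : ℕ) : ℝ) + 2 * s))
  set W := (1 + tangSq x) ^ (β / 2) with hW
  set δ := (1 - x 0 ^ 2 / lam ^ 2) ^ s with hδs
  have hW0 : 0 ≤ W := Real.rpow_nonneg (by linarith [tangSq_nonneg x]) _
  have hδ0 : 0 ≤ δ := Real.rpow_nonneg hδ _
  have hL := ((hQ.const_mul δ).add hG).sub (hE.const_mul 2)
  have hmono := integral_mono (hL.const_mul (2 * W)) (hD.add hDf) (fun z => by
    have hb := barrier_symm_ge hs.1 hβ.1.le (by linarith [hs.2, hβ.2]) h0 h1 z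
    have hp : 0 ≤ ‖z‖ ^ (((m + 1 : ℕ) : ℝ) + 2 * s) := by positivity
    have hd := div_le_div_of_nonneg_right hb hp
    simp only [Pi.add_apply, Pi.sub_apply, Function.comp_apply, LinearIsometryEquiv.norm_map]
    rw [← add_div]
    refine le_trans (le_of_eq ?_) hd
    ring)
  rw [integral_const_mul, integral_sub' ((hQ.const_mul δ).add hG) (hE.const_mul 2),
    integral_add' (hQ.const_mul δ) hG, integral_add' hD hDf, integral_const_mul,
    integral_const_mul] at hmono
  simp only [Function.comp_def] at hmono
  rw [hDi] at hmono
  have := mul_nonneg hW0 (mul_nonneg hδ0 hQ0)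
  linarith

/-- barrier estimate (2.25): for the auxiliary function
`h(x) = ((1 - x₁²/λ²)₊)^s (1+|x'|²)^{β/2}` one has `(-Δ)^s h ≥ (C/λ^{2s}) h`
in the slab `0 < x₁ < λ`, for all small `λ`. -/
theorem barrier_function_estimate
    (n : ℕ) [NeZero n] (hn : 2 ≤ n) (s : ℝ) (hs : s ∈ Set.Ioo (0 : ℝ) 1)
    (β : ℝ) (hβ : β ∈ Set.Ioo 0 (2 * s))
    (Cns : ℝ) (hCns : 0 < Cns) :
    ∃ C : ℝ, 0 < C ∧ ∃ lam₀ : ℝ, 0 < lam₀ ∧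
      ∀ lam : ℝ, 0 < lam → lam ≤ lam₀ →
        ∀ x : EuclideanSpace ℝ (Fin n), 0 < x 0 → x 0 < lam →
          ∃ v : ℝ,
            HasFracLapAt n s Cns
              (fun z : EuclideanSpace ℝ (Fin n) =>
                (max (1 - (z 0) ^ 2 / lam ^ 2) 0) ^ s *
                  (1 + ∑ i ∈ Finset.univ.erase (0 : Fin n), (z i) ^ 2) ^ (β / 2)) x v ∧
            C / lam ^ (2 * s) *
              ((max (1 - (x 0) ^ 2 / lam ^ 2) 0) ^ s *
                (1 + ∑ i ∈ Finset.univ.erase (0 : Fin n), (x i) ^ 2) ^ (β / 2)) ≤ v := by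
  obtain ⟨m, rfl⟩ : ∃ m, n = m + 1 := ⟨n - 1, by omega⟩
  obtain ⟨c, hc, hgain⟩ := integral_gain_ge (m := m) hs
  set K : ℝ := ∫ z : EuclideanSpace ℝ (Fin (m + 1)),
    ((1 + tangSq z) ^ (β / 2) - 1) / ‖z‖ ^ (((m + 1 : ℕ) : ℝ) + 2 * s) with hK
  have hK0 : 0 ≤ K := by
    refine integral_nonneg fun z => div_nonneg ?_ (by positivity)
    linarith [Real.one_le_rpow (x := 1 + tangSq z) (z := β / 2)
      (by linarith [tangSq_nonneg z]) (by linarith [hβ.1])]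
  have hs2 : 0 < 2 * s := by linarith [hs.1]
  -- For `λ ≤ λ₀` the tangential error `2 * K` is at most half of the gain `c / λ ^ (2 * s)`.
  refine ⟨Cns * c / 4, by positivity, (c / (4 * K + 1)) ^ (1 / (2 * s)), by positivity, ?_⟩
  intro lam hl hle x h0 h1
  refine ⟨_, hasFracLapAt_secondDiff (u := barrier s β lam) (by omega) hs.2 hβ.1.le hβ.2
    zero_le_one (measurable_barrier s β lam) (contDiffAt_barrier h0 h1)
    (barrier_growth hs.1.le hβ.1.le), ?_⟩
  change Cns * c / 4 / lam ^ (2 * s) * barrier s β lam x ≤ _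
  have hI := barrier_integral_ge hs hβ h0 h1
  rw [← hK] at hI
  have hg := hgain lam hl
  have hlp : 0 < lam ^ (2 * s) := by positivity
  have hlam : lam ^ (2 * s) * (4 * K + 1) ≤ c := by
    have h := Real.rpow_le_rpow hl.le hle hs2.le
    rw [← Real.rpow_mul (by positivity), one_div_mul_cancel hs2.ne', Real.rpow_one,
      le_div_iff₀ (by positivity)] at h
    exact h
  have hKle : 4 * K ≤ c / lam ^ (2 * s) := by
    rw [le_div_iff₀ hlp]
    linarith
  have hW0 : 0 ≤ (1 + tangSq x) ^ (β / 2) := Real.rpow_nonneg (by linarith [tangSq_nonneg x]) _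
  have hbar : barrier s β lam x ≤ (1 + tangSq x) ^ (β / 2) :=
    mul_le_of_le_one_left hW0 (profile_le_one hs.1.le _ _)
  have hcl : 0 < c / lam ^ (2 * s) := by positivity
  calc Cns * c / 4 / lam ^ (2 * s) * barrier s β lam x
      = Cns * (1 / 2 * (c / lam ^ (2 * s) / 2 * barrier s β lam x)) := by ring
    _ ≤ Cns * (1 / 2 * (c / lam ^ (2 * s) / 2 * (1 + tangSq x) ^ (β / 2))) := by gcongr
    _ ≤ Cns * (1 / 2 * ∫ z, (2 * barrier s β lam x - barrier s β lam (x + z) -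
          barrier s β lam (x - z)) / ‖z‖ ^ (((m + 1 : ℕ) : ℝ) + 2 * s)) := by
        gcongr
        refine le_trans ?_ hI
        rw [mul_comm]
        gcongr
        linarith
end
end
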